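/- arXiv:2506.13098 — 4 statements merged into one kernel-verified Lean document; each statement's English description precedes it below -/
import Mathlib

section
/- Let H be a complex Hilbert space, r_1, r_2, r_3 ∈ (0,1), and let (p_1,p_2,p_3) be the stationary probability vector for (r_1,r_2,r_3). Let A, B, C, A′, B′, C′ ∈ B(H)_+ all be invertible. Then the ALM-sequences from (A,B,C) and from (A′,B′,C′), both with (#_{r_1},#_{r_2},#_{r_3}), converge weakly to common limits S and S′ respectively, S and S′ are invertible, and d_T(S, S′) ≤ p_1·d_T(A,A′) + p_2·d_T(B,B′) + p_3·d_T(C,C′). -/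
/-!
Call `a` and `b` `t`-near if `a ≤ eᵗ b` and `b ≤ eᵗ a`; for strictly positive elements the Thompson
distance is the least such `t`. Everything takes place in a C⋆-algebra, where the weighted geometric
mean `#ᵣ` has the following properties.

* Symmetry `a #ᵣ b = b #₁₋ᵣ a` (`gm_symm`), because the square root of `a` in the definition of the
  mean may be replaced by any invertible `x` with `x x⋆ = a` (`gm_eq_of_factor`). With the
  Löwner–Heinz inequality it gives monotonicity in both variables, hence
  `d(a #ᵣ b, a' #ᵣ b') ≤ (1 - r) d(a, a') + r d(b, b')` (`near_gm`).
* `d(a #ᵣ b, a #ₛ b) ≤ |r - s| d(a, b)` (`near_gm_weight`), from scalar inequalities on the spectrum.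

Together these show that one step of the iteration contracts the diameter of the triple by the factor
`κ = max (rᵢ, 1 - rᵢ) < 1` (`near_step`). Each component also moves by at most the diameter, so it is
a geometric Cauchy sequence; order intervals `[e⁻ᵗ a, eᵗ a]` control the norm, so it converges in
norm to a strictly positive limit (`exists_limit`), the same one for the three components.

For two ALM-sequences, joint contractivity bounds the vector of the three distances after a step by a
stochastic matrix applied to the previous one. The vector `(p₁, p₂, p₃)` is stationary for this
matrix, so the weighted sum of the distances never increases (`IsALM.near_near`); the inequality for
the limits follows by the triangle inequality.
-/

open Filter Topology ContinuousLinearMap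

variable {H : Type*} [NormedAddCommGroup H] [InnerProductSpace ℂ H] [CompleteSpace H]

/-- The Loewner order on bounded operators: `A ≤ B` iff `B - A` is positive. -/
def OpLE (A B : H →L[ℂ] H) : Prop := (B - A).IsPositive

/-- Real power of an operator via the continuous functional calculus. -/
noncomputable def opPow (A : H →L[ℂ] H) (r : ℝ) : H →L[ℂ] H :=
  cfc (fun x : ℝ => x ^ r) A

/-- The weighted operator geometric mean `A #ᵣ B = A^{1/2}(A^{-1/2} B A^{-1/2})^r A^{1/2}`. -/
noncomputable def geomMean (r : ℝ) (A B : H →L[ℂ] H) : H →L[ℂ] H :=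
  opPow A (1/2) * opPow (opPow A (-(1/2)) * B * opPow A (-(1/2))) r * opPow A (1/2)

/-- The ALM-sequence from `(A,B,C)` with `(σ₁,σ₂,σ₃)`. -/
def ALMseq (σ₁ σ₂ σ₃ : (H →L[ℂ] H) → (H →L[ℂ] H) → (H →L[ℂ] H))
    (A B C : H →L[ℂ] H) : ℕ → (H →L[ℂ] H) × (H →L[ℂ] H) × (H →L[ℂ] H)
  | 0 => (A, B, C)
  | n + 1 =>
    let t := ALMseq σ₁ σ₂ σ₃ A B C n
    (σ₁ t.2.1 t.2.2, σ₂ t.2.2 t.1, σ₃ t.1 t.2.1)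

/-- `S` is the common weak limit of the ALM-sequence from `(A,B,C)` with `(σ₁,σ₂,σ₃)`. -/
def IsWeakALMLimit (σ₁ σ₂ σ₃ : (H →L[ℂ] H) → (H →L[ℂ] H) → (H →L[ℂ] H))
    (A B C S : H →L[ℂ] H) : Prop :=
  (∀ x : H, Tendsto (fun n => ((ALMseq σ₁ σ₂ σ₃ A B C n).1).reApplyInnerSelf x)
    atTop (𝓝 (S.reApplyInnerSelf x))) ∧
  (∀ x : H, Tendsto (fun n => ((ALMseq σ₁ σ₂ σ₃ A B C n).2.1).reApplyInnerSelf x)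
    atTop (𝓝 (S.reApplyInnerSelf x))) ∧
  (∀ x : H, Tendsto (fun n => ((ALMseq σ₁ σ₂ σ₃ A B C n).2.2).reApplyInnerSelf x)
    atTop (𝓝 (S.reApplyInnerSelf x)))

/-- The Thompson metric on invertible positive operators. -/
noncomputable def thompsonDist (X Y : H →L[ℂ] H) : ℝ :=
  Real.log (max (sInf {l : ℝ | 0 < l ∧ OpLE X ((l : ℂ) • Y)})
    (sInf {m : ℝ | 0 < m ∧ OpLE Y ((m : ℂ) • X)}))

namespace ThompsonALM

section CStar

/-! ### The weighted geometric mean -/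

variable {𝔄 : Type*} [CStarAlgebra 𝔄] [PartialOrder 𝔄] [StarOrderedRing 𝔄]

/-- The weighted geometric mean `a #ᵣ b` in a C⋆-algebra, written with `CFC.rpow`. -/
noncomputable def gm (r : ℝ) (a b : 𝔄) : 𝔄 :=
  a ^ (1 / 2 : ℝ) * (a ^ (-(1 / 2) : ℝ) * b * a ^ (-(1 / 2) : ℝ)) ^ r * a ^ (1 / 2 : ℝ)

lemma rpow_conj_unitary (u : unitary 𝔄) {a : 𝔄} (ha : IsStrictlyPositive a) (r : ℝ) :
    ((u : 𝔄) * a * star (u : 𝔄)) ^ r = u * a ^ r * star (u : 𝔄) := by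
  have h0 : (0 : 𝔄) ≤ u * a * star (u : 𝔄) := star_right_conjugate_nonneg ha.nonneg _
  have hsa : IsSelfAdjoint a := ha.isSelfAdjoint
  have hcont : ContinuousOn (fun x : ℝ => x ^ r) (spectrum ℝ a) := by
    intro x hx
    have : x ≠ 0 := by
      rintro rfl
      exact spectrum.zero_notMem ℝ ha.isUnit hx
    exact (Real.continuousAt_rpow_const x r (Or.inl this)).continuousWithinAt
  rw [CFC.rpow_eq_cfc_real h0, CFC.rpow_eq_cfc_real ha.nonneg]
  have hc : Continuous (Unitary.conjStarAlgAut ℂ 𝔄 u) := by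
    change Continuous (fun x : 𝔄 => (u : 𝔄) * x * star (u : 𝔄))
    fun_prop
  have := StarAlgHomClass.map_cfc (S := ℂ) (Unitary.conjStarAlgAut ℂ 𝔄 u)
    (fun x : ℝ => x ^ r) a hcont hc hsa (h0.isSelfAdjoint)
  simpa using this.symm

lemma rpow_half_mul {a : 𝔄} (ha : IsStrictlyPositive a) :
    a ^ (1 / 2 : ℝ) * a ^ (1 / 2 : ℝ) = a := by
  rw [← CFC.rpow_add ha.isUnit, add_halves, CFC.rpow_one a ha.nonneg]

lemma star_rpow (a : 𝔄) (r : ℝ) : star (a ^ r) = a ^ r :=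
  (CFC.rpow_nonneg (a := a) (y := r)).isSelfAdjoint.star_eq

/-- The congruence of `b` by `a ^ (-1/2)` is strictly positive. -/
lemma inner_pos {a b : 𝔄} (ha : IsStrictlyPositive a) (hb : IsStrictlyPositive b) :
    IsStrictlyPositive (a ^ (-(1 / 2) : ℝ) * b * a ^ (-(1 / 2) : ℝ)) :=
  IsStrictlyPositive.conjugate_of_isUnit_of_isSelfAdjoint b _ (IsStrictlyPositive.rpow a _ ha).isUnit
    (IsStrictlyPositive.rpow a _ ha).isSelfAdjoint hb

lemma gm_pos {a b : 𝔄} (ha : IsStrictlyPositive a) (hb : IsStrictlyPositive b) (r : ℝ) :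
    IsStrictlyPositive (gm r a b) :=
  IsStrictlyPositive.conjugate_of_isUnit_of_isSelfAdjoint _ _ (IsStrictlyPositive.rpow a _ ha).isUnit
    (IsStrictlyPositive.rpow a _ ha).isSelfAdjoint (IsStrictlyPositive.rpow _ _ (inner_pos ha hb))

/-- In the definition of `a #ᵣ b` the square root of `a` may be replaced by any invertible `x` with
`x x⋆ = a`, because `a ^ (-1/2) x` is then unitary. Here `y` is the inverse of `x`. -/
lemma gm_eq_of_factor {a b x y : 𝔄} (ha : IsStrictlyPositive a) (hb : IsStrictlyPositive b)
    (hxy : x * y = 1) (hyx : y * x = 1) (hx : x * star x = a) (r : ℝ) :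
    gm r a b = x * (y * b * star y) ^ r * star x := by
  set p := a ^ (1 / 2 : ℝ) with hp
  set q := a ^ (-(1 / 2) : ℝ) with hq
  have hpq : p * q = 1 := CFC.rpow_mul_rpow_neg _ ha
  have hqp : q * p = 1 := CFC.rpow_neg_mul_rpow _ ha
  have hpp : p * p = a := rpow_half_mul ha
  have sp : star p = p := star_rpow _ _
  have sq : star q = q := star_rpow _ _
  have h1 : (q * x) * star (q * x) = 1 := by
    calc (q * x) * star (q * x) = q * (x * star x) * q := by rw [star_mul, sq]; noncomm_ring
      _ = (q * p) * (p * q) := by rw [hx, ← hpp]; noncomm_ring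
      _ = 1 := by rw [hpq, hqp, one_mul]
  have h2 : (y * p) * (q * x) = 1 := by
    calc (y * p) * (q * x) = y * (p * q) * x := by noncomm_ring
      _ = 1 := by rw [hpq, mul_one, hyx]
  have h3 : star (q * x) = y * p := (left_inv_eq_right_inv h2 h1).symm
  let u : unitary 𝔄 := ⟨star (q * x), by
    rw [Unitary.mem_iff, star_star]
    exact ⟨h1, by rw [h3]; exact h2⟩⟩
  have hu : (u : 𝔄) = y * p := h3
  have hus : star (u : 𝔄) = q * x := star_star _
  have hy : y = u * q := by rw [hu, mul_assoc, hpq, mul_one]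
  have hsy : star y = q * star (u : 𝔄) := by
    conv_lhs => rw [hy]
    rw [star_mul, sq]
  have hxu : x * u = p := by rw [hu, ← mul_assoc, hxy, one_mul]
  have hux : star (u : 𝔄) * star x = p := by rw [← star_mul, hxu, sp]
  have h4 : y * b * star y = u * (q * b * q) * star (u : 𝔄) := by
    rw [hsy]
    conv_lhs => rw [hy]
    noncomm_ring
  rw [h4, rpow_conj_unitary u (inner_pos ha hb) r]
  calc gm r a b = p * (q * b * q) ^ r * p := rfl
    _ = (x * u) * (q * b * q) ^ r * (star (u : 𝔄) * star x) := by rw [hxu, hux]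
    _ = _ := by simp only [mul_assoc]; rfl

lemma gm_symm {a b : 𝔄} (ha : IsStrictlyPositive a) (hb : IsStrictlyPositive b) (r : ℝ) :
    gm r a b = gm (1 - r) b a := by
  set p := a ^ (1 / 2 : ℝ) with hp
  set q := a ^ (-(1 / 2) : ℝ) with hq
  have hpq : p * q = 1 := CFC.rpow_mul_rpow_neg _ ha
  have hqp : q * p = 1 := CFC.rpow_neg_mul_rpow _ ha
  have hpp : p * p = a := rpow_half_mul ha
  have sp : star p = p := star_rpow _ _
  have sq : star q = q := star_rpow _ _
  have hm : IsStrictlyPositive (q * b * q) := inner_pos ha hb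
  set m := q * b * q with hmdef
  set k := m ^ (1 / 2 : ℝ) with hk
  set l := m ^ (-(1 / 2) : ℝ) with hl
  have hkl : k * l = 1 := CFC.rpow_mul_rpow_neg _ hm
  have hlk : l * k = 1 := CFC.rpow_neg_mul_rpow _ hm
  have hkk : k * k = m := rpow_half_mul hm
  have sk : star k = k := star_rpow _ _
  have sl : star l = l := star_rpow _ _
  have e1 : (p * k) * (l * q) = 1 := by
    calc (p * k) * (l * q) = p * (k * l) * q := by noncomm_ring
      _ = 1 := by rw [hkl, mul_one, hpq]
  have e2 : (l * q) * (p * k) = 1 := by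
    calc (l * q) * (p * k) = l * (q * p) * k := by noncomm_ring
      _ = 1 := by rw [hqp, mul_one, hlk]
  have e3 : (p * k) * star (p * k) = b := by
    calc (p * k) * star (p * k) = p * (k * k) * p := by rw [star_mul, sp, sk]; noncomm_ring
      _ = (p * q) * b * (q * p) := by rw [hkk, hmdef]; noncomm_ring
      _ = b := by rw [hpq, hqp, one_mul, mul_one]
  have e4 : (l * q) * a * star (l * q) = m ^ (-1 : ℝ) := by
    calc (l * q) * a * star (l * q) = l * (q * p) * (p * q) * l := by
          rw [star_mul, sq, sl, ← hpp]; noncomm_ring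
      _ = l * l := by rw [hqp, hpq, mul_one, mul_one]
      _ = m ^ (-1 : ℝ) := by rw [hl, ← CFC.rpow_add hm.isUnit]; norm_num
  rw [gm_eq_of_factor hb ha e1 e2 e3 (1 - r), e4, CFC.rpow_rpow m _ _ (by norm_num) hm, star_mul,
    sp, sk]
  have e5 : k * m ^ (-1 * (1 - r)) * k = m ^ r := by
    rw [hk, ← CFC.rpow_add hm.isUnit, ← CFC.rpow_add hm.isUnit]
    congr 1
    ring
  calc gm r a b = p * m ^ r * p := rfl
    _ = p * k * m ^ (-1 * (1 - r)) * (k * p) := by rw [← e5]; noncomm_ring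

lemma gm_self {a : 𝔄} (ha : IsStrictlyPositive a) (r : ℝ) : gm r a a = a := by
  rw [gm, CFC.conjugate_rpow_neg_one_half a ha, CFC.one_rpow, mul_one, rpow_half_mul ha]

lemma smul_rpow {a : 𝔄} (ha : IsStrictlyPositive a) {c : ℝ} (hc : 0 < c) (r : ℝ) :
    (c • a) ^ r = c ^ r • a ^ r := by
  nontriviality 𝔄
  have hsa : IsSelfAdjoint a := ha.isSelfAdjoint
  have hpos : ∀ x ∈ spectrum ℝ a, 0 < x := fun x hx =>
    lt_of_le_of_ne (spectrum_nonneg_of_nonneg ha.nonneg hx) (by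
      rintro rfl
      exact spectrum.zero_notMem ℝ ha.isUnit hx)
  have h1 : cfc (fun x : ℝ => c * x) a = c • a := by
    rw [cfc_const_mul c (fun x : ℝ => x) a, cfc_id' ℝ a]
  rw [← h1, CFC.cfc_rpow (fun x hx => mul_pos hc (hpos x hx)), CFC.rpow_eq_cfc_real ha.nonneg,
    ← cfc_const_mul (c ^ r) (fun x : ℝ => x ^ r) a (by
      intro x hx
      exact (Real.continuousAt_rpow_const x r (Or.inl (hpos x hx).ne')).continuousWithinAt)]
  refine cfc_congr fun x hx => ?_
  exact Real.mul_rpow hc.le (hpos x hx).le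

lemma gm_smul_right {a b : 𝔄} (ha : IsStrictlyPositive a) (hb : IsStrictlyPositive b) {c : ℝ}
    (hc : 0 < c) (r : ℝ) : gm r a (c • b) = c ^ r • gm r a b := by
  simp only [gm, mul_smul_comm, smul_mul_assoc]
  rw [smul_rpow (inner_pos ha hb) hc]
  simp only [mul_smul_comm, smul_mul_assoc]

/-- Monotonicity in the second variable: the Löwner–Heinz inequality. -/
lemma gm_mono_right {a b b' : 𝔄} (h : b ≤ b') {r : ℝ} (hr : r ∈ Set.Icc (0 : ℝ) 1) :
    gm r a b ≤ gm r a b' := by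
  have hs : ∀ s : ℝ, IsSelfAdjoint (a ^ s) := fun s => star_rpow a s
  exact (hs _).conjugate_le_conjugate
    (CFC.rpow_le_rpow hr ((hs _).conjugate_le_conjugate h))

/-! ### Thompson closeness -/

/-- `Near t a b` says that `a` and `b` are within Thompson distance `t`: each is at most `exp t`
times the other. -/
def Near (t : ℝ) (a b : 𝔄) : Prop := a ≤ Real.exp t • b ∧ b ≤ Real.exp t • a

omit [StarOrderedRing 𝔄] in
lemma Near.symm {t : ℝ} {a b : 𝔄} (h : Near t a b) : Near t b a := ⟨h.2, h.1⟩

omit [StarOrderedRing 𝔄] in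
lemma near_zero (a : 𝔄) : Near 0 a a := by simp [Near]

lemma Near.trans {s t : ℝ} {a b c : 𝔄} (h : Near s a b) (h' : Near t b c) :
    Near (s + t) a c := by
  constructor
  · calc a ≤ Real.exp s • b := h.1
      _ ≤ Real.exp s • (Real.exp t • c) := smul_le_smul_of_nonneg_left h'.1 (Real.exp_pos s).le
      _ = Real.exp (s + t) • c := by rw [smul_smul, Real.exp_add]
  · calc c ≤ Real.exp t • b := h'.2
      _ ≤ Real.exp t • (Real.exp s • a) := smul_le_smul_of_nonneg_left h.2 (Real.exp_pos t).le
      _ = Real.exp (s + t) • a := by rw [smul_smul, Real.exp_add, mul_comm]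

lemma Near.mono {s t : ℝ} {a b : 𝔄} (ha : 0 ≤ a) (hb : 0 ≤ b) (hst : s ≤ t) (h : Near s a b) :
    Near t a b :=
  ⟨h.1.trans (smul_le_smul_of_nonneg_right (Real.exp_le_exp.2 hst) hb),
    h.2.trans (smul_le_smul_of_nonneg_right (Real.exp_le_exp.2 hst) ha)⟩

lemma Near.conj {t : ℝ} {a b c : 𝔄} (hc : IsSelfAdjoint c) (h : Near t a b) :
    Near t (c * a * c) (c * b * c) := by
  refine ⟨(hc.conjugate_le_conjugate h.1).trans_eq ?_, (hc.conjugate_le_conjugate h.2).trans_eq ?_⟩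
  all_goals simp only [mul_smul_comm, smul_mul_assoc]

lemma exists_near {a b : 𝔄} (ha : IsStrictlyPositive a) (hb : IsStrictlyPositive b) :
    ∃ t : ℝ, 0 ≤ t ∧ Near t a b := by
  cases subsingleton_or_nontrivial 𝔄
  · exact ⟨0, le_rfl, (Subsingleton.elim _ _).le, (Subsingleton.elim _ _).le⟩
  have key : ∀ {x y : 𝔄}, IsStrictlyPositive x → IsStrictlyPositive y →
      ∃ t : ℝ, 0 ≤ t ∧ x ≤ Real.exp t • y := by
    intro x y hx hy
    obtain ⟨c, hc, hcy⟩ := (CFC.exists_pos_algebraMap_le_iff hy.isSelfAdjoint).2 (fun r hr =>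
      lt_of_le_of_ne (spectrum_nonneg_of_nonneg hy.nonneg hr) (by
        rintro rfl
        exact spectrum.zero_notMem ℝ hy.isUnit hr))
    have h1 : ‖x‖ / c ≤ Real.exp (‖x‖ / c) := by
      linarith [Real.add_one_le_exp (‖x‖ / c)]
    refine ⟨‖x‖ / c, by positivity, ?_⟩
    calc x ≤ algebraMap ℝ 𝔄 ‖x‖ := hx.isSelfAdjoint.le_algebraMap_norm_self
      _ = (‖x‖ / c) • algebraMap ℝ 𝔄 c := by
          rw [Algebra.algebraMap_eq_smul_one, Algebra.algebraMap_eq_smul_one, smul_smul,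
            div_mul_cancel₀ _ hc.ne']
      _ ≤ (‖x‖ / c) • y := smul_le_smul_of_nonneg_left hcy (by positivity)
      _ ≤ Real.exp (‖x‖ / c) • y := smul_le_smul_of_nonneg_right h1 hy.nonneg
  obtain ⟨s, hs, h1⟩ := key ha hb
  obtain ⟨t, ht, h2⟩ := key hb ha
  exact ⟨max s t, le_max_of_le_left hs,
    h1.trans (smul_le_smul_of_nonneg_right (Real.exp_le_exp.2 (le_max_left _ _)) hb.nonneg),
    h2.trans (smul_le_smul_of_nonneg_right (Real.exp_le_exp.2 (le_max_right _ _)) ha.nonneg)⟩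

lemma near_gm_right {a b b' : 𝔄} (ha : IsStrictlyPositive a) (hb : IsStrictlyPositive b)
    (hb' : IsStrictlyPositive b') {r t : ℝ} (hr : r ∈ Set.Icc (0 : ℝ) 1) (h : Near t b b') :
    Near (r * t) (gm r a b) (gm r a b') := by
  have e : Real.exp (r * t) = Real.exp t ^ r := by rw [← Real.exp_mul, mul_comm]
  rw [Near, e, ← gm_smul_right ha hb' (Real.exp_pos t), ← gm_smul_right ha hb (Real.exp_pos t)]
  exact ⟨gm_mono_right h.1 hr, gm_mono_right h.2 hr⟩

/-- Joint contractivity of the weighted geometric mean. -/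
lemma near_gm {a a' b b' : 𝔄} (ha : IsStrictlyPositive a) (ha' : IsStrictlyPositive a')
    (hb : IsStrictlyPositive b) (hb' : IsStrictlyPositive b') {r s t : ℝ}
    (hr : r ∈ Set.Icc (0 : ℝ) 1) (hs : Near s a a') (ht : Near t b b') :
    Near ((1 - r) * s + r * t) (gm r a b) (gm r a' b') := by
  have h1 : Near ((1 - r) * s) (gm r a b) (gm r a' b) := by
    rw [gm_symm ha hb, gm_symm ha' hb]
    exact near_gm_right hb ha ha' ⟨by linarith [hr.2], by linarith [hr.1]⟩ hs
  exact h1.trans (near_gm_right ha' hb hb' hr ht)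

/-- Along the path `r ↦ a #ᵣ b` the distance grows at most at the speed `t` of the endpoints. -/
lemma near_gm_weight {a b : 𝔄} (ha : IsStrictlyPositive a) (hb : IsStrictlyPositive b)
    {t : ℝ} (h : Near t a b) (r s : ℝ) : Near (|r - s| * t) (gm r a b) (gm s a b) := by
  cases subsingleton_or_nontrivial 𝔄
  · exact ⟨(Subsingleton.elim _ _).le, (Subsingleton.elim _ _).le⟩
  set m := a ^ (-(1 / 2) : ℝ) * b * a ^ (-(1 / 2) : ℝ) with hm
  have hmp : IsStrictlyPositive m := inner_pos ha hb
  have hsa : IsSelfAdjoint m := hmp.isSelfAdjoint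
  have h1 : Near t 1 m := by
    have := h.conj (star_rpow a (-(1 / 2)))
    rwa [CFC.conjugate_rpow_neg_one_half a ha] at this
  have hpos : ∀ x ∈ spectrum ℝ m, 0 < x := fun x hx =>
    lt_of_le_of_ne (spectrum_nonneg_of_nonneg hmp.nonneg hx) (by
      rintro rfl
      exact spectrum.zero_notMem ℝ hmp.isUnit hx)
  have hlog : ∀ x ∈ spectrum ℝ m, |Real.log x| ≤ t := by
    intro x hx
    have hx0 := hpos x hx
    have u1 : x ≤ Real.exp t := by
      have : m ≤ algebraMap ℝ 𝔄 (Real.exp t) := by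
        rw [Algebra.algebraMap_eq_smul_one]; exact h1.2
      exact (le_algebraMap_iff_spectrum_le (R := ℝ)).1 this x hx
    have u2 : Real.exp (-t) ≤ x := by
      have : algebraMap ℝ 𝔄 (Real.exp (-t)) ≤ m := by
        rw [Algebra.algebraMap_eq_smul_one]
        calc Real.exp (-t) • (1 : 𝔄) ≤ Real.exp (-t) • (Real.exp t • m) :=
              smul_le_smul_of_nonneg_left h1.1 (Real.exp_pos _).le
          _ = m := by rw [smul_smul, ← Real.exp_add]; simp
      exact (algebraMap_le_iff_le_spectrum (R := ℝ)).1 this x hx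
    rw [abs_le]
    exact ⟨(Real.le_log_iff_exp_le hx0).2 u2, (Real.log_le_iff_le_exp hx0).2 u1⟩
  have hc : ∀ p : ℝ, ContinuousOn (fun x : ℝ => x ^ p) (spectrum ℝ m) := fun p x hx =>
    (Real.continuousAt_rpow_const x p (Or.inl (hpos x hx).ne')).continuousWithinAt
  have key : ∀ p q : ℝ, m ^ p ≤ Real.exp (|p - q| * t) • m ^ q := by
    intro p q
    rw [CFC.rpow_eq_cfc_real hmp.nonneg, CFC.rpow_eq_cfc_real hmp.nonneg,
      ← cfc_const_mul _ _ _ (hc q)]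
    refine cfc_mono (fun x hx => ?_) (hc p) (continuousOn_const.mul (hc q))
    have hx0 := hpos x hx
    rw [Real.rpow_def_of_pos hx0, Real.rpow_def_of_pos hx0, ← Real.exp_add, Real.exp_le_exp]
    have : Real.log x * (p - q) ≤ |p - q| * t :=
      calc Real.log x * (p - q) ≤ |Real.log x * (p - q)| := le_abs_self _
        _ = |p - q| * |Real.log x| := by rw [abs_mul, mul_comm]
        _ ≤ |p - q| * t := mul_le_mul_of_nonneg_left (hlog x hx) (abs_nonneg _)
    linarith
  have h2 : Near (|r - s| * t) (m ^ r) (m ^ s) := ⟨key r s, by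
    rw [abs_sub_comm]; exact key s r⟩
  exact h2.conj (star_rpow a (1 / 2))

/-- One step of the iteration contracts the diameter: `b #ᵤ c` and `c #ᵥ a` are the points at
parameters `1 - u` and `v` of the paths from `c` to `b` and to `a`. The larger of the two parameters
is the contraction factor: comparing the paths at the smaller parameter costs that parameter, and
moving along one path costs the difference. -/
lemma near_step {a b c : 𝔄} (ha : IsStrictlyPositive a) (hb : IsStrictlyPositive b)
    (hc : IsStrictlyPositive c) {u v κ K : ℝ} (hu : u ∈ Set.Ioo (0 : ℝ) 1)
    (hv : v ∈ Set.Ioo (0 : ℝ) 1) (huκ : 1 - u ≤ κ) (hvκ : v ≤ κ) (hK : 0 ≤ K)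
    (hab : Near K a b) (hbc : Near K b c) (hca : Near K c a) :
    Near (κ * K) (gm u b c) (gm v c a) := by
  rw [gm_symm hb hc]
  have hu' : 1 - u ∈ Set.Icc (0 : ℝ) 1 := ⟨by linarith [hu.2], by linarith [hu.1]⟩
  have hv' : v ∈ Set.Icc (0 : ℝ) 1 := ⟨hv.1.le, hv.2.le⟩
  rcases le_total (1 - u) v with h | h
  · refine Near.mono (gm_pos hc hb _).nonneg (gm_pos hc ha _).nonneg ?_
      ((near_gm_right hc hb ha hu' hab.symm).trans (near_gm_weight hc ha hca (1 - u) v))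
    rw [abs_of_nonpos (by linarith)]
    nlinarith
  · refine Near.mono (gm_pos hc hb _).nonneg (gm_pos hc ha _).nonneg ?_
      ((near_gm_weight hc hb hbc.symm (1 - u) v).trans (near_gm_right hc hb ha hv' hab.symm))
    rw [abs_of_nonneg (by linarith)]
    nlinarith

/-! ### Norm estimates and completeness -/

/-- A modulus turning Thompson closeness into relative norm closeness. -/
noncomputable def gap (t : ℝ) : ℝ := Real.exp t - Real.exp (-t) + (1 - Real.exp (-t))

lemma tendsto_gap {t : ℕ → ℝ} (ht : Tendsto t atTop (𝓝 0)) :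
    Tendsto (fun n => gap (t n)) atTop (𝓝 0) := by
  have hc : Continuous gap := by unfold gap; fun_prop
  have h0 : gap 0 = 0 := by simp [gap]
  have := (hc.tendsto 0).comp ht
  rwa [h0] at this

lemma exp_neg_smul_le {t : ℝ} {x y : 𝔄} (h : y ≤ Real.exp t • x) : Real.exp (-t) • y ≤ x :=
  calc Real.exp (-t) • y ≤ Real.exp (-t) • (Real.exp t • x) :=
        smul_le_smul_of_nonneg_left h (Real.exp_pos _).le
    _ = x := by rw [smul_smul, ← Real.exp_add]; simp

lemma Near.norm_sub_le {t : ℝ} (ht : 0 ≤ t) {x y : 𝔄} (h : Near t x y) :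
    ‖x - y‖ ≤ gap t * ‖y‖ := by
  have h1 : 0 ≤ x - Real.exp (-t) • y := sub_nonneg.2 (exp_neg_smul_le h.2)
  have h2 : x - Real.exp (-t) • y ≤ (Real.exp t - Real.exp (-t)) • y := by
    rw [sub_smul]; exact sub_le_sub_right h.1 _
  have h3 := CStarAlgebra.norm_le_norm_of_nonneg_of_le h1 h2
  have e1 : Real.exp (-t) ≤ 1 := Real.exp_le_one_iff.2 (by linarith)
  have e2 : (1 : ℝ) ≤ Real.exp t := Real.one_le_exp ht
  rw [norm_smul, Real.norm_of_nonneg (by linarith)] at h3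
  calc ‖x - y‖ = ‖(x - Real.exp (-t) • y) + (Real.exp (-t) - 1) • y‖ := by
        congr 1; rw [sub_smul, one_smul]; abel
    _ ≤ ‖x - Real.exp (-t) • y‖ + ‖(Real.exp (-t) - 1) • y‖ := norm_add_le _ _
    _ ≤ (Real.exp t - Real.exp (-t)) * ‖y‖ + (1 - Real.exp (-t)) * ‖y‖ := by
        rw [norm_smul, Real.norm_of_nonpos (by linarith)]
        linarith
    _ = gap t * ‖y‖ := by rw [gap]; ring

lemma tendsto_of_near {x : ℕ → 𝔄} {S : 𝔄} {t : ℕ → ℝ} (ht0 : ∀ n, 0 ≤ t n)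
    (ht : Tendsto t atTop (𝓝 0)) (h : ∀ n, Near (t n) (x n) S) : Tendsto x atTop (𝓝 S) := by
  rw [tendsto_iff_norm_sub_tendsto_zero]
  refine squeeze_zero (fun _ => norm_nonneg _) (fun n => (h n).norm_sub_le (ht0 n)) ?_
  simpa using (tendsto_gap ht).mul_const ‖S‖

/-- Completeness of the Thompson metric, for sequences with geometrically decaying steps. -/
lemma exists_limit {x : ℕ → 𝔄} (hx : ∀ n, IsStrictlyPositive (x n)) {κ K : ℝ} (hκ0 : 0 ≤ κ)
    (hκ1 : κ < 1) (hK : 0 ≤ K) (h : ∀ n, Near (K * κ ^ n) (x n) (x (n + 1))) :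
    ∃ S : 𝔄, IsStrictlyPositive S ∧ ∀ n, Near (K / (1 - κ) * κ ^ n) (x n) S := by
  have hd : 0 < 1 - κ := by linarith
  set τ : ℕ → ℝ := fun n => K / (1 - κ) * κ ^ n with hτ
  have hτ0 : ∀ n, 0 ≤ τ n := fun n => by positivity
  have hτs : ∀ n, K * κ ^ n + τ (n + 1) = τ n := by
    intro n
    simp only [hτ]
    field_simp
    ring
  have hτt : Tendsto τ atTop (𝓝 0) := by
    simpa using (tendsto_pow_atTop_nhds_zero_of_lt_one hκ0 hκ1).const_mul (K / (1 - κ))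
  have h1 : ∀ n m, n ≤ m → Near (τ n - τ m) (x n) (x m) := by
    intro n m hnm
    induction m, hnm using Nat.le_induction with
    | base => simpa using near_zero (x n)
    | succ m _ ih =>
      have := ih.trans (h m)
      rwa [show τ n - τ m + K * κ ^ m = τ n - τ (m + 1) by linarith [hτs m]] at this
  have h2 : ∀ n m, n ≤ m → Near (τ n) (x n) (x m) := fun n m hnm =>
    (h1 n m hnm).mono (hx n).nonneg (hx m).nonneg (by linarith [hτ0 m])
  have hb : ∀ n, ‖x n‖ ≤ Real.exp (τ 0) * ‖x 0‖ := by
    intro n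
    have := CStarAlgebra.norm_le_norm_of_nonneg_of_le (hx n).nonneg (h2 0 n n.zero_le).2
    rwa [norm_smul, Real.norm_of_nonneg (Real.exp_pos _).le] at this
  have hg : ∀ {t : ℝ}, 0 ≤ t → 0 ≤ gap t := by
    intro t ht
    have e1 : Real.exp (-t) ≤ 1 := Real.exp_le_one_iff.2 (by linarith)
    have e2 : (1 : ℝ) ≤ Real.exp t := Real.one_le_exp ht
    unfold gap
    linarith
  have hcau : CauchySeq x := by
    refine cauchySeq_of_le_tendsto_0' (fun n => gap (τ n) * (Real.exp (τ 0) * ‖x 0‖)) ?_ ?_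
    · intro n m hnm
      rw [dist_eq_norm]
      exact ((h2 n m hnm).norm_sub_le (hτ0 n)).trans
        (mul_le_mul_of_nonneg_left (hb m) (hg (hτ0 n)))
    · simpa using (tendsto_gap hτt).mul_const (Real.exp (τ 0) * ‖x 0‖)
  obtain ⟨S, hS⟩ := cauchySeq_tendsto_of_complete hcau
  have h3 : ∀ n, Near (τ n) (x n) S := fun n =>
    ⟨ge_of_tendsto (hS.const_smul _) (eventually_atTop.2 ⟨n, fun m hm => (h2 n m hm).1⟩),
      le_of_tendsto hS (eventually_atTop.2 ⟨n, fun m hm => (h2 n m hm).2⟩)⟩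
  refine ⟨S, ?_, h3⟩
  exact ((hx 0).smul (Real.exp_pos (-τ 0))).of_le (exp_neg_smul_le (h3 0).1)

/-! ### The iteration -/

/-- `x, y, z` are the three components of an ALM-sequence for the weighted geometric means. -/
structure IsALM (r₁ r₂ r₃ : ℝ) (x y z : ℕ → 𝔄) : Prop where
  pos₁ : IsStrictlyPositive (x 0)
  pos₂ : IsStrictlyPositive (y 0)
  pos₃ : IsStrictlyPositive (z 0)
  succ₁ : ∀ n, x (n + 1) = gm r₁ (y n) (z n)
  succ₂ : ∀ n, y (n + 1) = gm r₂ (z n) (x n)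
  succ₃ : ∀ n, z (n + 1) = gm r₃ (x n) (y n)

section Iteration

variable {r₁ r₂ r₃ : ℝ} {x y z x' y' z' : ℕ → 𝔄}

lemma IsALM.pos (h : IsALM r₁ r₂ r₃ x y z) (n : ℕ) :
    IsStrictlyPositive (x n) ∧ IsStrictlyPositive (y n) ∧ IsStrictlyPositive (z n) := by
  induction n with
  | zero => exact ⟨h.pos₁, h.pos₂, h.pos₃⟩
  | succ n ih =>
    obtain ⟨h1, h2, h3⟩ := ih
    rw [h.succ₁, h.succ₂, h.succ₃]
    exact ⟨gm_pos h2 h3 _, gm_pos h3 h1 _, gm_pos h1 h2 _⟩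

/-- The three components converge, in the Thompson sense, to a common limit. -/
lemma IsALM.exists_limit (h : IsALM r₁ r₂ r₃ x y z) (hr₁ : r₁ ∈ Set.Ioo (0 : ℝ) 1)
    (hr₂ : r₂ ∈ Set.Ioo (0 : ℝ) 1) (hr₃ : r₃ ∈ Set.Ioo (0 : ℝ) 1) :
    ∃ (S : 𝔄) (t : ℕ → ℝ), IsStrictlyPositive S ∧ (∀ n, 0 ≤ t n) ∧ Tendsto t atTop (𝓝 0) ∧
      ∀ n, Near (t n) (x n) S ∧ Near (t n) (y n) S ∧ Near (t n) (z n) S := by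
  obtain ⟨κ, hκ1, k1, k2, k3, k1', k2', k3'⟩ : ∃ κ : ℝ, κ < 1 ∧ r₁ ≤ κ ∧ r₂ ≤ κ ∧ r₃ ≤ κ ∧
      1 - r₁ ≤ κ ∧ 1 - r₂ ≤ κ ∧ 1 - r₃ ≤ κ := by
    refine ⟨max (max r₁ (1 - r₁)) (max (max r₂ (1 - r₂)) (max r₃ (1 - r₃))), ?_, ?_⟩
    · simp only [max_lt_iff]
      refine ⟨⟨hr₁.2, ?_⟩, ⟨hr₂.2, ?_⟩, hr₃.2, ?_⟩
      · linarith [hr₁.1]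
      · linarith [hr₂.1]
      · linarith [hr₃.1]
    · simp
  have hκ0 : 0 ≤ κ := hr₁.1.le.trans k1
  obtain ⟨K₁, hK₁, n1⟩ := exists_near h.pos₁ h.pos₂
  obtain ⟨K₂, hK₂, n2⟩ := exists_near h.pos₂ h.pos₃
  obtain ⟨K₃, hK₃, n3⟩ := exists_near h.pos₃ h.pos₁
  set K := K₁ + K₂ + K₃ with hKdef
  have hK : 0 ≤ K := by positivity
  have hdiam : ∀ n, Near (K * κ ^ n) (x n) (y n) ∧ Near (K * κ ^ n) (y n) (z n) ∧
      Near (K * κ ^ n) (z n) (x n) := by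
    intro n
    induction n with
    | zero =>
      rw [pow_zero, mul_one]
      exact ⟨n1.mono h.pos₁.nonneg h.pos₂.nonneg (by linarith),
        n2.mono h.pos₂.nonneg h.pos₃.nonneg (by linarith),
        n3.mono h.pos₃.nonneg h.pos₁.nonneg (by linarith)⟩
    | succ n ih =>
      obtain ⟨i1, i2, i3⟩ := ih
      obtain ⟨q1, q2, q3⟩ := h.pos n
      have hKn : 0 ≤ K * κ ^ n := by positivity
      rw [h.succ₁, h.succ₂, h.succ₃, show K * κ ^ (n + 1) = κ * (K * κ ^ n) by ring]
      exact ⟨near_step q1 q2 q3 hr₁ hr₂ k1' k2 hKn i1 i2 i3,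
        near_step q2 q3 q1 hr₂ hr₃ k2' k3 hKn i2 i3 i1,
        near_step q3 q1 q2 hr₃ hr₁ k3' k1 hKn i3 i1 i2⟩
  have hstep : ∀ n, Near (K * κ ^ n) (x n) (x (n + 1)) := by
    intro n
    obtain ⟨i1, i2, i3⟩ := hdiam n
    obtain ⟨q1, q2, q3⟩ := h.pos n
    have := near_gm q1 q2 q1 q3 (r := r₁) ⟨hr₁.1.le, hr₁.2.le⟩ i1 i3.symm
    rwa [gm_self q1, ← add_mul, sub_add_cancel, one_mul, ← h.succ₁] at this
  obtain ⟨S, hS, hlim⟩ := ThompsonALM.exists_limit (fun n => (h.pos n).1) hκ0 hκ1 hK hstep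
  have hd : 0 < 1 - κ := by linarith
  refine ⟨S, fun n => K * κ ^ n + K / (1 - κ) * κ ^ n, hS, fun n => by positivity, ?_, ?_⟩
  · have h0 := tendsto_pow_atTop_nhds_zero_of_lt_one hκ0 hκ1
    simpa using (h0.const_mul K).add (h0.const_mul (K / (1 - κ)))
  · intro n
    obtain ⟨i1, i2, i3⟩ := hdiam n
    obtain ⟨q1, q2, q3⟩ := h.pos n
    have : 0 ≤ K * κ ^ n := by positivity
    exact ⟨(hlim n).mono q1.nonneg hS.nonneg (by linarith), i1.symm.trans (hlim n),
      i3.trans (hlim n)⟩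

/-- The `p`-weighted sum of the three distances does not increase along the iteration, since `p` is
stationary for the transition matrix that governs the three distances. -/
lemma IsALM.near_near (h : IsALM r₁ r₂ r₃ x y z) (h' : IsALM r₁ r₂ r₃ x' y' z')
    (hr₁ : r₁ ∈ Set.Ioo (0 : ℝ) 1) (hr₂ : r₂ ∈ Set.Ioo (0 : ℝ) 1) (hr₃ : r₃ ∈ Set.Ioo (0 : ℝ) 1)
    {p₁ p₂ p₃ : ℝ} (hstat₁ : p₁ = r₂ * p₂ + (1 - r₃) * p₃)
    (hstat₂ : p₂ = (1 - r₁) * p₁ + r₃ * p₃) (hstat₃ : p₃ = r₁ * p₁ + (1 - r₂) * p₂)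
    {d₁ d₂ d₃ : ℝ} (hd₁ : 0 ≤ d₁) (hd₂ : 0 ≤ d₂) (hd₃ : 0 ≤ d₃)
    (n₁ : Near d₁ (x 0) (x' 0)) (n₂ : Near d₂ (y 0) (y' 0)) (n₃ : Near d₃ (z 0) (z' 0)) (n : ℕ) :
    ∃ s₁ s₂ s₃ : ℝ, 0 ≤ s₁ ∧ 0 ≤ s₂ ∧ 0 ≤ s₃ ∧
      p₁ * s₁ + p₂ * s₂ + p₃ * s₃ = p₁ * d₁ + p₂ * d₂ + p₃ * d₃ ∧
      Near s₁ (x n) (x' n) ∧ Near s₂ (y n) (y' n) ∧ Near s₃ (z n) (z' n) := by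
  induction n with
  | zero => exact ⟨d₁, d₂, d₃, hd₁, hd₂, hd₃, rfl, n₁, n₂, n₃⟩
  | succ n ih =>
    obtain ⟨s₁, s₂, s₃, hs₁, hs₂, hs₃, hs, i1, i2, i3⟩ := ih
    obtain ⟨q1, q2, q3⟩ := h.pos n
    obtain ⟨q1', q2', q3'⟩ := h'.pos n
    have c₁ : r₁ ∈ Set.Icc (0 : ℝ) 1 := ⟨hr₁.1.le, hr₁.2.le⟩
    have c₂ : r₂ ∈ Set.Icc (0 : ℝ) 1 := ⟨hr₂.1.le, hr₂.2.le⟩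
    have c₃ : r₃ ∈ Set.Icc (0 : ℝ) 1 := ⟨hr₃.1.le, hr₃.2.le⟩
    have e₁ : 0 ≤ 1 - r₁ := by linarith [c₁.2]
    have e₂ : 0 ≤ 1 - r₂ := by linarith [c₂.2]
    have e₃ : 0 ≤ 1 - r₃ := by linarith [c₃.2]
    have f₁ := c₁.1
    have f₂ := c₂.1
    have f₃ := c₃.1
    rw [h.succ₁, h.succ₂, h.succ₃, h'.succ₁, h'.succ₂, h'.succ₃]
    refine ⟨_, _, _, ?_, ?_, ?_, ?_, near_gm q2 q2' q3 q3' c₁ i2 i3,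
      near_gm q3 q3' q1 q1' c₂ i3 i1, near_gm q1 q1' q2 q2' c₃ i1 i2⟩
    · positivity
    · positivity
    · positivity
    · rw [← hs]
      linear_combination (-s₁) * hstat₁ + (-s₂) * hstat₂ + (-s₃) * hstat₃

end Iteration

end CStar

/-! ### The Thompson metric on operators -/

section Operator

variable {H : Type*} [NormedAddCommGroup H] [InnerProductSpace ℂ H] [CompleteSpace H]

omit [CompleteSpace H] in
lemma opLE_smul_iff {X Y : H →L[ℂ] H} {l : ℝ} : OpLE X ((l : ℂ) • Y) ↔ X ≤ l • Y := by
  rw [Complex.coe_smul]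
  exact Iff.rfl

lemma opPow_eq {A : H →L[ℂ] H} (hA : 0 ≤ A) (r : ℝ) : opPow A r = A ^ r :=
  (CFC.rpow_eq_cfc_real hA).symm

lemma geomMean_eq {A B : H →L[ℂ] H} (hA : IsStrictlyPositive A) (hB : IsStrictlyPositive B)
    (r : ℝ) : geomMean r A B = gm r A B := by
  rw [geomMean, opPow_eq hA.nonneg, opPow_eq hA.nonneg, opPow_eq (inner_pos hA hB).nonneg, gm]

lemma near_nonneg [Nontrivial H] {X Y : H →L[ℂ] H} (hX : IsStrictlyPositive X) {t : ℝ}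
    (h : Near t X Y) : 0 ≤ t := by
  have h2 := h.trans h.symm
  have h3 := CStarAlgebra.norm_le_norm_of_nonneg_of_le hX.nonneg h2.1
  rw [norm_smul, Real.norm_of_nonneg (Real.exp_pos _).le] at h3
  have h4 : 0 < ‖X‖ := norm_pos_iff.2 hX.isUnit.ne_zero
  have h5 : 1 ≤ Real.exp (t + t) := by
    by_contra! hlt
    nlinarith
  linarith [Real.one_le_exp_iff.1 h5]

lemma thompsonDist_le {X Y : H →L[ℂ] H} {t : ℝ} (ht : 0 ≤ t) (h : Near t X Y) :
    thompsonDist X Y ≤ t := by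
  have key : ∀ {U V : H →L[ℂ] H}, U ≤ Real.exp t • V →
      sInf {l : ℝ | 0 < l ∧ OpLE U ((l : ℂ) • V)} ≤ Real.exp t := fun hUV =>
    csInf_le ⟨0, fun l hl => hl.1.le⟩ ⟨Real.exp_pos t, opLE_smul_iff.2 hUV⟩
  have h0 : 0 ≤ sInf {l : ℝ | 0 < l ∧ OpLE X ((l : ℂ) • Y)} :=
    Real.sInf_nonneg fun l hl => hl.1.le
  rw [thompsonDist]
  rcases (h0.trans (le_max_left _ _)).eq_or_lt with hz | hpos
  · rw [← hz, Real.log_zero]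
    exact ht
  · exact (Real.log_le_iff_le_exp hpos).2 (max_le (key h.1) (key h.2))

/-- The infima in the Thompson metric are attained: this uses closedness of the positive cone. -/
lemma near_thompsonDist {X Y : H →L[ℂ] H} (hX : IsStrictlyPositive X)
    (hY : IsStrictlyPositive Y) : Near (thompsonDist X Y) X Y := by
  cases subsingleton_or_nontrivial H
  · exact ⟨(Subsingleton.elim _ _).le, (Subsingleton.elim _ _).le⟩
  obtain ⟨t, ht, hn⟩ := exists_near hX hY
  have key : ∀ {U V : H →L[ℂ] H}, 0 ≤ V → U ≤ Real.exp t • V → ∀ m : ℝ,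
      sInf {l : ℝ | 0 < l ∧ OpLE U ((l : ℂ) • V)} ≤ m → U ≤ m • V := by
    intro U V hV hUV m hm
    have h1 : ∀ ε : ℝ, 0 < ε → U ≤ (m + ε) • V := by
      intro ε hε
      obtain ⟨l, ⟨_, hl⟩, hlt⟩ := exists_lt_of_csInf_lt
        (⟨_, Real.exp_pos t, opLE_smul_iff.2 hUV⟩ :
          {l : ℝ | 0 < l ∧ OpLE U ((l : ℂ) • V)}.Nonempty) (hm.trans_lt (lt_add_of_pos_right m hε))
      exact (opLE_smul_iff.1 hl).trans (smul_le_smul_of_nonneg_right hlt.le hV)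
    have h2 : Tendsto (fun ε : ℝ => (m + ε) • V) (𝓝[>] 0) (𝓝 (m • V)) := by
      have hc : Continuous (fun ε : ℝ => (m + ε) • V) := by fun_prop
      have := hc.tendsto 0
      rw [add_zero] at this
      exact this.mono_left nhdsWithin_le_nhds
    exact ge_of_tendsto h2 (eventually_mem_nhdsWithin.mono fun ε hε => h1 ε hε)
  set m := max (sInf {l : ℝ | 0 < l ∧ OpLE X ((l : ℂ) • Y)})
    (sInf {m : ℝ | 0 < m ∧ OpLE Y ((m : ℂ) • X)}) with hm
  have k1 : X ≤ m • Y := key hY.nonneg hn.1 m (le_max_left _ _)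
  have k2 : Y ≤ m • X := key hX.nonneg hn.2 m (le_max_right _ _)
  have hm0 : 0 ≤ m := (Real.sInf_nonneg fun l hl => hl.1.le).trans (le_max_left _ _)
  have hmpos : 0 < m := by
    refine lt_of_le_of_ne hm0 fun h0 => hX.isUnit.ne_zero ?_
    rw [← h0, zero_smul] at k1
    exact le_antisymm k1 hX.nonneg
  have e : Real.exp (thompsonDist X Y) = m := Real.exp_log hmpos
  rw [Near, e]
  exact ⟨k1, k2⟩

lemma thompsonDist_nonneg {X Y : H →L[ℂ] H} (hX : IsStrictlyPositive X)
    (hY : IsStrictlyPositive Y) : 0 ≤ thompsonDist X Y := by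
  cases subsingleton_or_nontrivial H
  · have hs : ∀ U V : H →L[ℂ] H, {l : ℝ | 0 < l ∧ OpLE U ((l : ℂ) • V)} = Set.Ioi 0 := by
      intro U V
      ext l
      refine ⟨fun h => h.1, fun h => ⟨h, ?_⟩⟩
      rw [opLE_smul_iff]
      exact (Subsingleton.elim _ _).le
    rw [thompsonDist, hs, hs, csInf_Ioi, max_self, Real.log_zero]
  · exact near_nonneg hX (near_thompsonDist hX hY)

lemma isALM_ALMseq {r₁ r₂ r₃ : ℝ} {A B C : H →L[ℂ] H} (hA : IsStrictlyPositive A)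
    (hB : IsStrictlyPositive B) (hC : IsStrictlyPositive C) :
    IsALM r₁ r₂ r₃
      (fun n => (ALMseq (geomMean r₁) (geomMean r₂) (geomMean r₃) A B C n).1)
      (fun n => (ALMseq (geomMean r₁) (geomMean r₂) (geomMean r₃) A B C n).2.1)
      (fun n => (ALMseq (geomMean r₁) (geomMean r₂) (geomMean r₃) A B C n).2.2) := by
  set s := ALMseq (geomMean r₁) (geomMean r₂) (geomMean r₃) A B C with hs
  have hpos : ∀ n, IsStrictlyPositive (s n).1 ∧ IsStrictlyPositive (s n).2.1 ∧
      IsStrictlyPositive (s n).2.2 := by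
    intro n
    induction n with
    | zero => exact ⟨hA, hB, hC⟩
    | succ n ih =>
      obtain ⟨h1, h2, h3⟩ := ih
      change IsStrictlyPositive (geomMean r₁ (s n).2.1 (s n).2.2) ∧
        IsStrictlyPositive (geomMean r₂ (s n).2.2 (s n).1) ∧
        IsStrictlyPositive (geomMean r₃ (s n).1 (s n).2.1)
      rw [geomMean_eq h2 h3, geomMean_eq h3 h1, geomMean_eq h1 h2]
      exact ⟨gm_pos h2 h3 _, gm_pos h3 h1 _, gm_pos h1 h2 _⟩
  exact ⟨hA, hB, hC, fun n => geomMean_eq (hpos n).2.1 (hpos n).2.2 r₁,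
    fun n => geomMean_eq (hpos n).2.2 (hpos n).1 r₂, fun n => geomMean_eq (hpos n).1 (hpos n).2.1 r₃⟩

omit [CompleteSpace H] in
lemma tendsto_reApply {x : ℕ → H →L[ℂ] H} {S : H →L[ℂ] H} (h : Tendsto x atTop (𝓝 S)) (v : H) :
    Tendsto (fun n => (x n).reApplyInnerSelf v) atTop (𝓝 (S.reApplyInnerSelf v)) := by
  have hc : Continuous fun T : H →L[ℂ] H => T.reApplyInnerSelf v := by
    unfold ContinuousLinearMap.reApplyInnerSelf
    fun_prop
  exact (hc.tendsto S).comp h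

end Operator

end ThompsonALM

/-- Thompson-metric contraction: the ALM-sequences from `(A,B,C)` and
`(A',B',C')` with `(#_{r₁},#_{r₂},#_{r₃})` converge weakly to common invertible limits `S`,
`S'`, and `d_T(S,S') ≤ p₁ d_T(A,A') + p₂ d_T(B,B') + p₃ d_T(C,C')`, where `(p₁,p₂,p₃)` is the
stationary probability vector for `(r₁,r₂,r₃)`. -/
theorem stmt_13
    (r₁ r₂ r₃ : ℝ) (hr₁ : r₁ ∈ Set.Ioo (0:ℝ) 1) (hr₂ : r₂ ∈ Set.Ioo (0:ℝ) 1)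
    (hr₃ : r₃ ∈ Set.Ioo (0:ℝ) 1)
    (p₁ p₂ p₃ : ℝ) (hp₁ : 0 ≤ p₁) (hp₂ : 0 ≤ p₂) (hp₃ : 0 ≤ p₃) (hpsum : p₁ + p₂ + p₃ = 1)
    (hstat₁ : p₁ = r₂ * p₂ + (1 - r₃) * p₃)
    (hstat₂ : p₂ = (1 - r₁) * p₁ + r₃ * p₃)
    (hstat₃ : p₃ = r₁ * p₁ + (1 - r₂) * p₂)
    (A B C A' B' C' : H →L[ℂ] H)
    (hA : A.IsPositive) (hB : B.IsPositive) (hC : C.IsPositive)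
    (hA' : A'.IsPositive) (hB' : B'.IsPositive) (hC' : C'.IsPositive)
    (hAu : IsUnit A) (hBu : IsUnit B) (hCu : IsUnit C)
    (hA'u : IsUnit A') (hB'u : IsUnit B') (hC'u : IsUnit C') :
    ∃ S S' : H →L[ℂ] H,
      S.IsPositive ∧ S'.IsPositive ∧ IsUnit S ∧ IsUnit S' ∧
      IsWeakALMLimit (geomMean r₁) (geomMean r₂) (geomMean r₃) A B C S ∧
      IsWeakALMLimit (geomMean r₁) (geomMean r₂) (geomMean r₃) A' B' C' S' ∧
      thompsonDist S S' ≤ p₁ * thompsonDist A A' + p₂ * thompsonDist B B' +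
        p₃ * thompsonDist C C' := by
  have hA0 : IsStrictlyPositive A := hAu.isStrictlyPositive ((nonneg_iff_isPositive A).2 hA)
  have hB0 : IsStrictlyPositive B := hBu.isStrictlyPositive ((nonneg_iff_isPositive B).2 hB)
  have hC0 : IsStrictlyPositive C := hCu.isStrictlyPositive ((nonneg_iff_isPositive C).2 hC)
  have hA1 : IsStrictlyPositive A' := hA'u.isStrictlyPositive ((nonneg_iff_isPositive A').2 hA')
  have hB1 : IsStrictlyPositive B' := hB'u.isStrictlyPositive ((nonneg_iff_isPositive B').2 hB')
  have hC1 : IsStrictlyPositive C' := hC'u.isStrictlyPositive ((nonneg_iff_isPositive C').2 hC')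
  have h := ThompsonALM.isALM_ALMseq (r₁ := r₁) (r₂ := r₂) (r₃ := r₃) hA0 hB0 hC0
  have h' := ThompsonALM.isALM_ALMseq (r₁ := r₁) (r₂ := r₂) (r₃ := r₃) hA1 hB1 hC1
  obtain ⟨S, t, hS, ht0, ht, hn⟩ := h.exists_limit hr₁ hr₂ hr₃
  obtain ⟨S', t', hS', ht0', ht', hn'⟩ := h'.exists_limit hr₁ hr₂ hr₃
  have conv := @ThompsonALM.tendsto_of_near (H →L[ℂ] H) _ _ _
  refine ⟨S, S', (nonneg_iff_isPositive S).1 hS.nonneg, (nonneg_iff_isPositive S').1 hS'.nonneg,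
    hS.isUnit, hS'.isUnit,
    ⟨ThompsonALM.tendsto_reApply (conv ht0 ht fun n => (hn n).1),
      ThompsonALM.tendsto_reApply (conv ht0 ht fun n => (hn n).2.1),
      ThompsonALM.tendsto_reApply (conv ht0 ht fun n => (hn n).2.2)⟩,
    ⟨ThompsonALM.tendsto_reApply (conv ht0' ht' fun n => (hn' n).1),
      ThompsonALM.tendsto_reApply (conv ht0' ht' fun n => (hn' n).2.1),
      ThompsonALM.tendsto_reApply (conv ht0' ht' fun n => (hn' n).2.2)⟩, ?_⟩
  set D := p₁ * thompsonDist A A' + p₂ * thompsonDist B B' + p₃ * thompsonDist C C' with hD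
  have hbound : ∀ n, thompsonDist S S' ≤ D + (t n + t' n) := by
    intro n
    obtain ⟨s₁, s₂, s₃, hs₁, hs₂, hs₃, hs, i1, i2, i3⟩ := h.near_near h' hr₁ hr₂ hr₃ hstat₁ hstat₂
      hstat₃ (ThompsonALM.thompsonDist_nonneg hA0 hA1) (ThompsonALM.thompsonDist_nonneg hB0 hB1)
      (ThompsonALM.thompsonDist_nonneg hC0 hC1) (ThompsonALM.near_thompsonDist hA0 hA1)
      (ThompsonALM.near_thompsonDist hB0 hB1) (ThompsonALM.near_thompsonDist hC0 hC1) n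
    obtain ⟨a1, a2, a3⟩ := hn n
    obtain ⟨b1, b2, b3⟩ := hn' n
    have u0 := ht0 n
    have u0' := ht0' n
    have u1 := ThompsonALM.thompsonDist_le (by positivity) ((a1.symm.trans i1).trans b1)
    have u2 := ThompsonALM.thompsonDist_le (by positivity) ((a2.symm.trans i2).trans b2)
    have u3 := ThompsonALM.thompsonDist_le (by positivity) ((a3.symm.trans i3).trans b3)
    -- average the three estimates with the weights `p₁, p₂, p₃`
    calc thompsonDist S S'
        = p₁ * thompsonDist S S' + p₂ * thompsonDist S S' + p₃ * thompsonDist S S' := by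
          rw [← add_mul, ← add_mul, hpsum, one_mul]
      _ ≤ p₁ * (t n + s₁ + t' n) + p₂ * (t n + s₂ + t' n) + p₃ * (t n + s₃ + t' n) := by gcongr
      _ = D + (t n + t' n) := by linear_combination hs + (t n + t' n) * hpsum
  have hlim : Tendsto (fun n => D + (t n + t' n)) atTop (𝓝 D) := by
    simpa using (ht.add ht').const_add D
  exact ge_of_tendsto hlim (Eventually.of_forall hbound)
end

section
/- Let H be a complex Hilbert space and X, Y ∈ B(H)_+ invertible. If 0 ≤ s ≤ r ≤ 1, then X #_r Y ≤ ρ(X^{−1}Y)^{r−s} · (X #_s Y), where ρ denotes the spectral radius. Consequently, for all r, s ∈ [0,1], R(X #_r Y, X #_s Y) ≤ R(X,Y)^{|r−s|}, where R(X,Y) := max{ρ(X^{−1}Y), ρ(XY^{−1})}. -/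
/-!
Put `C = X^{-1/2} Y X^{-1/2}`, a positive invertible operator, so that
`X #ᵣ Y = X^{1/2} C^r X^{1/2}`.  Conjugation by `X^{1/2}` turns `C` into `Y X⁻¹` and conjugation by
`X^{-1/2}` turns it into `X⁻¹ Y`, and likewise `C⁻¹` is similar to `X Y⁻¹`.  Conjugation preserves
the spectrum (`specRad_conj`), so the spectral radii in the theorem are those of `C` and `C⁻¹`.

For the first claim, every `x` in the spectrum of `C` satisfies `0 < x ≤ ρ(C)`, hence
`x ^ r ≤ ρ(C) ^ (r - s) * x ^ s`; the functional calculus gives `C^r ≤ ρ(C)^{r-s} C^s`, and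
conjugating by `X^{1/2}` preserves the order.

For the second, `(X #ᵣ Y)⁻¹ (X #ₛ Y)` is similar to `C^{s-r}` and `(X #ᵣ Y) (X #ₛ Y)⁻¹` to
`C^{r-s}`, while `ρ(C^u) ≤ max(ρ(C), ρ(C⁻¹))^{|u|}` by the spectral mapping theorem
(`specRad_opPow_le`).
-/

open Filter Topology ContinuousLinearMap

variable {H : Type*} [NormedAddCommGroup H] [InnerProductSpace ℂ H] [CompleteSpace H]

/-- The spectral radius of an operator, as a real number. -/
noncomputable def specRad (X : H →L[ℂ] H) : ℝ := (spectralRadius ℂ X).toReal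

/-- `R(X,Y) = max{ρ(X⁻¹Y), ρ(XY⁻¹)}`. -/
noncomputable def Rfun (X Y : H →L[ℂ] H) : ℝ :=
  max (specRad (Ring.inverse X * Y)) (specRad (X * Ring.inverse Y))

lemma specRad_nonneg (A : H →L[ℂ] H) : 0 ≤ specRad A := ENNReal.toReal_nonneg

lemma abs_le_specRad {A : H →L[ℂ] H} {x : ℝ} (hx : x ∈ spectrum ℝ A) : |x| ≤ specRad A := by
  rcases subsingleton_or_nontrivial (H →L[ℂ] H) with h | h
  · simp [spectrum.of_subsingleton] at hx
  have h1 : (x : ℂ) ∈ spectrum ℂ A := (spectrum.algebraMap_mem_iff ℂ).2 hx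
  have h2 : (‖(x : ℂ)‖₊ : ENNReal) ≤ spectralRadius ℂ A :=
    le_iSup₂ (α := ENNReal) (f := fun k (_ : k ∈ spectrum ℂ A) => (‖k‖₊ : ENNReal)) (x : ℂ) h1
  obtain ⟨k, _, hk⟩ := spectrum.exists_nnnorm_eq_spectralRadius_of_nonempty (𝕜 := ℂ) ⟨_, h1⟩
  have h3 := ENNReal.toReal_mono (by rw [← hk]; exact ENNReal.coe_ne_top) h2
  simpa [specRad] using h3

lemma specRad_le {A : H →L[ℂ] H} (hA : IsSelfAdjoint A) {M : ℝ} (hM : 0 ≤ M)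
    (h : ∀ x ∈ spectrum ℝ A, |x| ≤ M) : specRad A ≤ M := by
  refine ENNReal.toReal_le_of_le_ofReal hM (iSup₂_le fun k hk => ?_)
  have h1 := hA.mem_spectrum_eq_re hk
  have h2 : k.re ∈ spectrum ℝ A := by
    rw [h1] at hk
    exact (spectrum.algebraMap_mem_iff ℂ).1 hk
  rw [← ENNReal.ofReal_coe_nnreal]
  refine ENNReal.ofReal_le_ofReal ?_
  rw [h1]
  simpa using h _ h2

lemma specRad_conj {P Q A : H →L[ℂ] H} (hPQ : P * Q = 1) (hQP : Q * P = 1) :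
    specRad (P * A * Q) = specRad A := by
  have h := spectrum.units_conjugate (R := ℂ) (a := A) (u := ⟨P, Q, hPQ, hQP⟩)
  simp only [Units.inv_mk] at h
  simp only [specRad, spectralRadius, h]

lemma pos_of_mem_spectrum {A : H →L[ℂ] H} (hA : 0 ≤ A) (hu : IsUnit A) :
    ∀ x ∈ spectrum ℝ A, 0 < x := fun x hx =>
  (spectrum_nonneg_of_nonneg hA hx).lt_of_ne fun h =>
    spectrum.zero_notMem ℝ hu (h ▸ hx)

lemma continuousOn_rpow_spectrum {A : H →L[ℂ] H} (hA : 0 ≤ A) (hu : IsUnit A) (r : ℝ) :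
    ContinuousOn (fun x : ℝ => x ^ r) (spectrum ℝ A) := fun x hx =>
  (Real.continuousAt_rpow_const x r
    (Or.inl (pos_of_mem_spectrum hA hu x hx).ne')).continuousWithinAt

lemma opPow_mul_opPow {A : H →L[ℂ] H} (hA : 0 ≤ A) (hu : IsUnit A) (r s : ℝ) :
    opPow A r * opPow A s = opPow A (r + s) := by
  rw [opPow, opPow, opPow, ← cfc_mul _ _ A (continuousOn_rpow_spectrum hA hu r)
    (continuousOn_rpow_spectrum hA hu s)]
  exact cfc_congr fun x hx => (Real.rpow_add (pos_of_mem_spectrum hA hu x hx) r s).symm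

lemma opPow_zero {A : H →L[ℂ] H} (hA : 0 ≤ A) : opPow A 0 = 1 := by
  have := hA.isSelfAdjoint
  simpa [opPow] using cfc_const_one ℝ A

lemma opPow_one {A : H →L[ℂ] H} (hA : 0 ≤ A) : opPow A 1 = A := by
  have := hA.isSelfAdjoint
  simpa [opPow] using cfc_id' ℝ A

lemma opPow_isSelfAdjoint (A : H →L[ℂ] H) (r : ℝ) : IsSelfAdjoint (opPow A r) :=
  cfc_predicate _ A

/-- A power of a positive operator with inverse `E` has spectral radius controlled by those of the
operator and of `E`, whatever the sign of the exponent. -/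
lemma specRad_opPow_le {A E : H →L[ℂ] H} (hA : 0 ≤ A) (hAE : A * E = 1) (hEA : E * A = 1) (u : ℝ) :
    specRad (opPow A u) ≤ max (specRad A) (specRad E) ^ |u| := by
  have hu : IsUnit A := ⟨⟨A, E, hAE, hEA⟩, rfl⟩
  have hM : 0 ≤ max (specRad A) (specRad E) := le_max_of_le_left (specRad_nonneg A)
  refine specRad_le (opPow_isSelfAdjoint A u) (Real.rpow_nonneg hM _) fun y hy => ?_
  have hsa := hA.isSelfAdjoint
  rw [opPow, cfc_map_spectrum (fun x : ℝ => x ^ u) A hsa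
    (continuousOn_rpow_spectrum hA hu u)] at hy
  obtain ⟨x, hx, rfl⟩ := hy
  have hx0 := pos_of_mem_spectrum hA hu x hx
  change |x ^ u| ≤ _
  rw [abs_of_pos (Real.rpow_pos_of_pos hx0 u)]
  rcases le_total 0 u with h | h
  · rw [abs_of_nonneg h]
    exact Real.rpow_le_rpow hx0.le
      (((le_abs_self x).trans (abs_le_specRad hx)).trans (le_max_left _ _)) h
  · rw [abs_of_nonpos h]
    have hinv : x⁻¹ ∈ spectrum ℝ E := by
      have := (spectrum.inv_mem_iff (r := Units.mk0 x hx0.ne')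
        (a := (⟨A, E, hAE, hEA⟩ : (H →L[ℂ] H)ˣ))).1 hx
      simpa using this
    have : x ^ u = x⁻¹ ^ (-u) := by
      rw [Real.inv_rpow hx0.le, Real.rpow_neg hx0.le, inv_inv]
    rw [this]
    exact Real.rpow_le_rpow (inv_nonneg.2 hx0.le)
      (((le_abs_self _).trans (abs_le_specRad hinv)).trans (le_max_right _ _)) (neg_nonneg.2 h)

lemma ringInverse_eq {A B : H →L[ℂ] H} (h1 : A * B = 1) (h2 : B * A = 1) :
    Ring.inverse A = B :=
  Ring.inverse_unit (⟨A, B, h1, h2⟩ : (H →L[ℂ] H)ˣ)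

lemma opPow_le_smul {C : H →L[ℂ] H} (hC : 0 ≤ C) (hu : IsUnit C) {r s : ℝ} (hsr : s ≤ r) :
    opPow C r ≤ (specRad C ^ (r - s)) • opPow C s := by
  have hsa := hC.isSelfAdjoint
  have hs := continuousOn_rpow_spectrum hC hu s
  rw [opPow, opPow, ← cfc_const_mul _ _ C hs]
  refine cfc_mono (fun x hx => ?_) (continuousOn_rpow_spectrum hC hu r)
    (continuousOn_const.mul hs)
  have hx0 := pos_of_mem_spectrum hC hu x hx
  have h1 : x ^ r = x ^ (r - s) * x ^ s := by rw [← Real.rpow_add hx0]; simp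
  rw [h1]
  exact mul_le_mul_of_nonneg_right
    (Real.rpow_le_rpow hx0.le ((le_abs_self x).trans (abs_le_specRad hx)) (sub_nonneg.2 hsr))
    (Real.rpow_nonneg hx0.le s)

/-- For invertible positive `X, Y` and `0 ≤ s ≤ r ≤ 1`,
`X #ᵣ Y ≤ ρ(X⁻¹Y)^{r−s} · (X #ₛ Y)`; consequently for all `r, s ∈ [0,1]`,
`R(X #ᵣ Y, X #ₛ Y) ≤ R(X,Y)^{|r−s|}`. -/
theorem stmt_14
    (X Y : H →L[ℂ] H) (hX : X.IsPositive) (hY : Y.IsPositive)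
    (hXu : IsUnit X) (hYu : IsUnit Y) :
    (∀ r s : ℝ, 0 ≤ s → s ≤ r → r ≤ 1 →
      OpLE (geomMean r X Y)
        (((specRad (Ring.inverse X * Y) ^ (r - s) : ℝ) : ℂ) • geomMean s X Y)) ∧
    (∀ r s : ℝ, r ∈ Set.Icc (0:ℝ) 1 → s ∈ Set.Icc (0:ℝ) 1 →
      Rfun (geomMean r X Y) (geomMean s X Y) ≤ Rfun X Y ^ |r - s|) := by
  have hX0 : 0 ≤ X := (nonneg_iff_isPositive X).2 hX
  have hY0 : 0 ≤ Y := (nonneg_iff_isPositive Y).2 hY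
  obtain ⟨P, hP⟩ : ∃ P, P = opPow X (1/2) := ⟨_, rfl⟩
  obtain ⟨Q, hQ⟩ : ∃ Q, Q = opPow X (-(1/2)) := ⟨_, rfl⟩
  have hPQ : P * Q = 1 := by
    rw [hP, hQ, opPow_mul_opPow hX0 hXu, add_neg_cancel, opPow_zero hX0]
  have hQP : Q * P = 1 := by
    rw [hP, hQ, opPow_mul_opPow hX0 hXu, neg_add_cancel, opPow_zero hX0]
  have hPP : P * P = X := by
    rw [hP, opPow_mul_opPow hX0 hXu, add_halves, opPow_one hX0]
  have hPsa : IsSelfAdjoint P := hP ▸ opPow_isSelfAdjoint X _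
  have hQsa : IsSelfAdjoint Q := hQ ▸ opPow_isSelfAdjoint X _
  -- Cancellation rules in the form needed inside right-associated products.
  have hPQ' (Z : H →L[ℂ] H) : P * (Q * Z) = Z := by rw [← mul_assoc, hPQ, one_mul]
  have hQP' (Z : H →L[ℂ] H) : Q * (P * Z) = Z := by rw [← mul_assoc, hQP, one_mul]
  obtain ⟨V, hYV, hVY⟩ : ∃ V, Y * V = 1 ∧ V * Y = 1 :=
    ⟨_, Ring.mul_inverse_cancel Y hYu, Ring.inverse_mul_cancel Y hYu⟩
  have hYV' (Z : H →L[ℂ] H) : Y * (V * Z) = Z := by rw [← mul_assoc, hYV, one_mul]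
  have hVY' (Z : H →L[ℂ] H) : V * (Y * Z) = Z := by rw [← mul_assoc, hVY, one_mul]
  have hXinv : Ring.inverse X = Q * Q := by
    apply ringInverse_eq <;> simp [← hPP, mul_assoc, hPQ, hQP, hPQ', hQP']
  have hYinv : Ring.inverse Y = V := ringInverse_eq hYV hVY
  obtain ⟨C, hC⟩ : ∃ C, C = Q * Y * Q := ⟨_, rfl⟩
  have hC0 : 0 ≤ C := by
    rw [hC]
    exact hQsa.conjugate_nonneg hY0
  have hCE : C * (P * V * P) = 1 := by
    simp [hC, mul_assoc, hQP, hQP', hYV']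
  have hEC : (P * V * P) * C = 1 := by
    simp [hC, mul_assoc, hPQ, hPQ', hVY']
  have hCu : IsUnit C := ⟨⟨C, P * V * P, hCE, hEC⟩, rfl⟩
  have hρC : specRad (Ring.inverse X * Y) = specRad C := by
    rw [← specRad_conj (A := C) hQP hPQ, hXinv, hC]
    simp [mul_assoc, hQP]
  have hρE : specRad (X * Ring.inverse Y) = specRad (P * V * P) := by
    rw [← specRad_conj (A := P * V * P) hPQ hQP, hYinv, ← hPP]
    simp [mul_assoc, hPQ]
  have hG (r : ℝ) : geomMean r X Y = P * opPow C r * P := by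
    rw [geomMean, ← hP, ← hQ, ← hC]
  have hCadd (a b : ℝ) (Z : H →L[ℂ] H) :
      opPow C a * (opPow C b * Z) = opPow C (a + b) * Z := by
    rw [← mul_assoc, opPow_mul_opPow hC0 hCu]
  have hGinv (r : ℝ) : Ring.inverse (P * opPow C r * P) = Q * opPow C (-r) * Q := by
    apply ringInverse_eq <;>
      simp [mul_assoc, hPQ, hQP, hPQ', hQP', hCadd, opPow_zero hC0]
  refine ⟨fun r s _ hsr _ => ?_, fun r s _ _ => ?_⟩
  · rw [OpLE, ← ContinuousLinearMap.le_def, hρC, hG, hG, Complex.coe_smul]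
    have h := hPsa.conjugate_le_conjugate (opPow_le_smul hC0 hCu hsr)
    rwa [mul_smul_comm, smul_mul_assoc] at h
  · have h1 : specRad (Ring.inverse (P * opPow C r * P) * (P * opPow C s * P))
        = specRad (opPow C (s - r)) := by
      rw [← specRad_conj (A := opPow C (s - r)) hQP hPQ, hGinv]
      simp [mul_assoc, hQP', hCadd, neg_add_eq_sub]
    have h2 : specRad ((P * opPow C r * P) * Ring.inverse (P * opPow C s * P))
        = specRad (opPow C (r - s)) := by
      rw [← specRad_conj (A := opPow C (r - s)) hPQ hQP, hGinv]
      simp [mul_assoc, hPQ', hCadd, sub_eq_add_neg]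
    rw [Rfun, Rfun, hG, hG, h1, h2, hρC, hρE]
    refine max_le ?_ (specRad_opPow_le hC0 hCE hEC _)
    rw [abs_sub_comm]
    exact specRad_opPow_le hC0 hCE hEC _
end

section
/- Let H be a complex Hilbert space, let σ_1, σ_2, σ_3 be binary operations on B(H)_+ each satisfying the four Kubo–Ando axioms, and let r_1, r_2, r_3 ∈ (0,1). Assume A σ_k B ≤ (1−r_k)A + r_k B for all A, B ∈ B(H)_+ and all k, and for at least two indices k: for all real α, β ≥ 0, ((1−r_k)α + r_k β)·I ≤ (αI) σ_k (βI) implies α = β. Let (p_1,p_2,p_3) be the stationary probability vector for (r_1,r_2,r_3), let A, B, C ∈ B(H)_+ with common weak limit S of the ALM-sequence from (A,B,C) with (σ_1,σ_2,σ_3), and let v ∈ H. If ⟨S v, v⟩ = ⟨(p_1 A + p_2 B + p_3 C)v, v⟩, then ⟨A v, v⟩ = ⟨B v, v⟩ = ⟨C v, v⟩. -/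
/-!
The quantity `p₁⟨Aₙv,v⟩ + p₂⟨Bₙv,v⟩ + p₃⟨Cₙv,v⟩` is non-increasing along the ALM-sequence: each
`σₖ` lies below its weighted arithmetic mean, and stationarity of `p` makes the `p`-average of the
three arithmetic means equal to the `p`-average of the original triple. Its limit is `⟨Sv,v⟩`, so
under the hypothesis it is constant. All `pᵢ` being positive, already the first step attains
equality in each of the three arithmetic-mean bounds at `v`.

It remains to see that equality for one strictly concave `σ` forces `⟨Av,v⟩ = ⟨Bv,v⟩`
(`inner_eq_of_mean_eq`). Compressing by the projection `P` onto `ℂv`, the transformer inequality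
and monotonicity give `P(AσB)P ≤ (αP)σ(βP) ≤ (αI)σ(βI)`, where `PAP = αP` and `PBP = βP`.
The same compression, applied to `αI` and `βI` for every line, shows that every vector is an
eigenvector of `(αI)σ(βI)`, which is therefore a scalar operator (`scalar_of_kuboAndo`). The bound
at `v` is then a bound in the Loewner order, and strict concavity applies. Two such equalities
among the three pairs suffice.
-/

open Filter Topology ContinuousLinearMap

variable {H : Type*} [NormedAddCommGroup H] [InnerProductSpace ℂ H] [CompleteSpace H]

/-- `Xₙ ↓ X`: a non-increasing sequence converging strongly to `X`. -/
def DownTo (X : ℕ → H →L[ℂ] H) (L : H →L[ℂ] H) : Prop :=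
  (∀ n, OpLE (X (n+1)) (X n)) ∧ ∀ v : H, Tendsto (fun n => X n v) atTop (𝓝 (L v))

/-- The four Kubo–Ando axioms for a binary operation on `B(H)₊`. -/
def KuboAndo (σ : (H →L[ℂ] H) → (H →L[ℂ] H) → (H →L[ℂ] H)) : Prop :=
  (∀ A B : H →L[ℂ] H, A.IsPositive → B.IsPositive → (σ A B).IsPositive) ∧
  (∀ A B C D : H →L[ℂ] H, A.IsPositive → B.IsPositive → C.IsPositive → D.IsPositive →
    OpLE A C → OpLE B D → OpLE (σ A B) (σ C D)) ∧
  (∀ A B T : H →L[ℂ] H, A.IsPositive → B.IsPositive → T.IsPositive →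
    OpLE (T ∘L (σ A B) ∘L T) (σ (T ∘L A ∘L T) (T ∘L B ∘L T))) ∧
  (∀ (As Bs : ℕ → H →L[ℂ] H) (A B : H →L[ℂ] H),
    (∀ n, (As n).IsPositive) → (∀ n, (Bs n).IsPositive) → A.IsPositive → B.IsPositive →
    DownTo As A → DownTo Bs B → DownTo (fun n => σ (As n) (Bs n)) (σ A B)) ∧
  σ 1 1 = 1

/-- Strict concavity (relative to weight `r`) tested on nonnegative scalar multiples of `1`. -/
def StrictConc (σ : (H →L[ℂ] H) → (H →L[ℂ] H) → (H →L[ℂ] H)) (r : ℝ) : Prop :=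
  ∀ α β : ℝ, 0 ≤ α → 0 ≤ β →
    OpLE ((((1 - r) * α + r * β : ℝ) : ℂ) • (1 : H →L[ℂ] H))
      (σ ((α : ℂ) • (1 : H →L[ℂ] H)) ((β : ℂ) • (1 : H →L[ℂ] H))) → α = β

/-! ### Positive operators and compression to a line -/

/-- A vector at which the form of a positive operator vanishes lies in its kernel. -/
lemma IsPositive.apply_eq_zero {D : H →L[ℂ] H} (hD : D.IsPositive) {w : H}
    (hw : D.reApplyInnerSelf w = 0) : D w = 0 := by
  -- Positivity at `w - t • D w` reads `0 ≤ -2t‖Dw‖² + t² ⟨D(Dw), Dw⟩` for all real `t`.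
  have key : ∀ t : ℝ, 0 ≤ -2 * t * ‖D w‖ ^ 2 + t ^ 2 * D.reApplyInnerSelf (D w) := by
    intro t
    have h := hD.2 (w - (t : ℂ) • D w)
    have h1 : inner ℂ (D (D w)) w = inner ℂ (D w) (D w) := hD.inner_left_eq_inner_right _ _
    have h2 : RCLike.re (inner ℂ (D w) (D w)) = ‖D w‖ ^ 2 := by
      rw [inner_self_eq_norm_sq_to_K]; norm_cast
    simp only [ContinuousLinearMap.reApplyInnerSelf_apply] at h hw ⊢
    simp only [map_sub, map_smul, inner_sub_left, inner_sub_right, inner_smul_left,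
      inner_smul_right, h1, Complex.conj_ofReal, hw] at h
    simp only [RCLike.re_to_complex, Complex.re_ofReal_mul] at h h2 ⊢
    simp only [Complex.sub_re, Complex.re_ofReal_mul, Complex.zero_re, h2] at h
    linarith
  have hK := hD.2 (D w)
  set K := D.reApplyInnerSelf (D w)
  have hn : ‖D w‖ ^ 2 = 0 := by
    have h := key (‖D w‖ ^ 2 / (K + 1))
    have hK1 : 0 < K + 1 := by linarith
    have e : -2 * (‖D w‖ ^ 2 / (K + 1)) * ‖D w‖ ^ 2 + (‖D w‖ ^ 2 / (K + 1)) ^ 2 * K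
        = -((‖D w‖ ^ 2 / (K + 1)) ^ 2 * (K + 2)) := by
      field_simp; ring
    rw [e] at h
    have h3 : (‖D w‖ ^ 2 / (K + 1)) ^ 2 = 0 := by
      nlinarith [sq_nonneg (‖D w‖ ^ 2 / (K + 1))]
    have h4 := pow_eq_zero_iff (two_ne_zero) |>.1 h3
    rcases div_eq_zero_iff.1 h4 with h5 | h5
    · exact h5
    · linarith
  simpa using hn

/-- The orthogonal projection onto the line spanned by `v`. -/
noncomputable def lineProj (v : H) : H →L[ℂ] H := (ℂ ∙ v).starProjection

lemma lineProj_pos (v : H) : (lineProj v).IsPositive :=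
  .of_isStarProjection isStarProjection_starProjection

lemma lineProj_le_one (v : H) : OpLE (lineProj v) 1 := by
  unfold OpLE lineProj
  rw [← Submodule.starProjection_orthogonal']
  exact .of_isStarProjection isStarProjection_starProjection

lemma lineProj_self (v : H) : lineProj v v = v :=
  Submodule.starProjection_eq_self_iff.2 (Submodule.mem_span_singleton_self v)

lemma lineProj_apply (v x : H) :
    lineProj v x = (inner ℂ v x / ((‖v‖ ^ 2 : ℝ) : ℂ)) • v :=
  Submodule.starProjection_singleton ℂ x

lemma lineProj_comp (v : H) : lineProj v ∘L lineProj v = lineProj v := by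
  ext x
  simp only [ContinuousLinearMap.comp_apply]
  rw [lineProj_apply v x, map_smul, lineProj_self]

lemma IsPositive.inner_eq {A : H →L[ℂ] H} (hA : A.IsPositive) (v : H) :
    inner ℂ v (A v) = (A.reApplyInnerSelf v : ℂ) := by
  rw [← hA.inner_left_eq_inner_right]
  exact (hA.isSymmetric.coe_reApplyInnerSelf_apply v).symm

lemma lineProj_compress {A : H →L[ℂ] H} (hA : A.IsPositive) (v : H) :
    lineProj v ∘L A ∘L lineProj v
      = ((A.reApplyInnerSelf v / ‖v‖ ^ 2 : ℝ) : ℂ) • lineProj v := by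
  ext x
  simp only [ContinuousLinearMap.comp_apply, smul_apply]
  rw [lineProj_apply v x, map_smul, map_smul, lineProj_apply v (A v), IsPositive.inner_eq hA,
    smul_comm]
  push_cast
  rfl

lemma OpLE.reApply {A B : H →L[ℂ] H} (h : OpLE A B) (v : H) :
    A.reApplyInnerSelf v ≤ B.reApplyInnerSelf v := by
  have := h.2 v
  simp only [ContinuousLinearMap.reApplyInnerSelf_apply, sub_apply,
    inner_sub_left, map_sub] at this ⊢
  linarith

lemma reApply_compress (X : H →L[ℂ] H) (v : H) :
    (lineProj v ∘L X ∘L lineProj v).reApplyInnerSelf v = X.reApplyInnerSelf v := by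
  simp only [ContinuousLinearMap.reApplyInnerSelf_apply, ContinuousLinearMap.comp_apply,
    lineProj_self]
  rw [(lineProj_pos v).inner_left_eq_inner_right, lineProj_self]

lemma reApply_add (X Y : H →L[ℂ] H) (v : H) :
    (X + Y).reApplyInnerSelf v = X.reApplyInnerSelf v + Y.reApplyInnerSelf v := by
  simp [ContinuousLinearMap.reApplyInnerSelf_apply, inner_add_left]

lemma reApply_smul (a : ℝ) (X : H →L[ℂ] H) (v : H) :
    ((a : ℂ) • X).reApplyInnerSelf v = a * X.reApplyInnerSelf v := by
  simp only [ContinuousLinearMap.reApplyInnerSelf_apply, smul_apply, inner_smul_left,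
    Complex.conj_ofReal, RCLike.re_to_complex, Complex.re_ofReal_mul]

lemma isPositive_ofReal_smul {A : H →L[ℂ] H} (hA : A.IsPositive) {a : ℝ} (ha : 0 ≤ a) :
    ((a : ℂ) • A).IsPositive :=
  hA.smul_of_nonneg (by exact_mod_cast ha)

lemma opLE_smul_lineProj {a : ℝ} (ha : 0 ≤ a) (v : H) :
    OpLE ((a : ℂ) • lineProj v) ((a : ℂ) • (1 : H →L[ℂ] H)) := by
  unfold OpLE
  rw [← smul_sub]
  exact isPositive_ofReal_smul (lineProj_le_one v) ha

/-! ### Equality in the arithmetic-mean bound -/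

section

variable {σ : (H →L[ℂ] H) → (H →L[ℂ] H) → (H →L[ℂ] H)}

/-- If `A` and `B` compress to `αP` and `βP` on the line `ℂv` with projection `P`, then the
compression of `A σ B` lies below `(αI) σ (βI)`. -/
lemma compress_le (hσ : KuboAndo σ) {A B : H →L[ℂ] H} (hA : A.IsPositive) (hB : B.IsPositive)
    {α β : ℝ} (hα : 0 ≤ α) (hβ : 0 ≤ β) (v : H)
    (hcA : lineProj v ∘L A ∘L lineProj v = (α : ℂ) • lineProj v)
    (hcB : lineProj v ∘L B ∘L lineProj v = (β : ℂ) • lineProj v) :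
    OpLE (lineProj v ∘L σ A B ∘L lineProj v) (σ ((α : ℂ) • 1) ((β : ℂ) • 1)) := by
  obtain ⟨-, hmono, htrans, -, -⟩ := hσ
  have h1 := htrans A B (lineProj v) hA hB (lineProj_pos v)
  rw [hcA, hcB] at h1
  have h2 := hmono _ _ _ _ (isPositive_ofReal_smul (lineProj_pos v) hα) (isPositive_ofReal_smul (lineProj_pos v) hβ)
    (isPositive_ofReal_smul ContinuousLinearMap.isPositive_one hα)
    (isPositive_ofReal_smul ContinuousLinearMap.isPositive_one hβ)
    (opLE_smul_lineProj hα v) (opLE_smul_lineProj hβ v)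
  unfold OpLE at *
  simpa using h1.add h2

lemma compress_smul_one (a : ℝ) (v : H) :
    lineProj v ∘L ((a : ℂ) • (1 : H →L[ℂ] H)) ∘L lineProj v = (a : ℂ) • lineProj v := by
  have : lineProj v ∘L ((a : ℂ) • (1 : H →L[ℂ] H)) ∘L lineProj v
      = (a : ℂ) • (lineProj v ∘L lineProj v) := by
    ext x; simp
  rw [this, lineProj_comp]

/-- A Kubo–Ando operation sends scalar operators to scalar operators: its value dominates each of
its own compressions to a line, so every vector is an eigenvector. -/
lemma scalar_of_kuboAndo (hσ : KuboAndo σ) {α β : ℝ} (hα : 0 ≤ α) (hβ : 0 ≤ β) :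
    ∃ c : ℂ, σ ((α : ℂ) • 1) ((β : ℂ) • 1) = c • (1 : H →L[ℂ] H) := by
  set X := σ ((α : ℂ) • 1) ((β : ℂ) • 1) with hX
  have heig : ∀ w : H, ∃ c : ℂ, X w = c • w := by
    intro w
    have h : OpLE (lineProj w ∘L X ∘L lineProj w) X :=
      compress_le hσ (isPositive_ofReal_smul ContinuousLinearMap.isPositive_one hα)
        (isPositive_ofReal_smul ContinuousLinearMap.isPositive_one hβ) hα hβ w
        (compress_smul_one α w) (compress_smul_one β w)
    have h0 : (X - lineProj w ∘L X ∘L lineProj w).reApplyInnerSelf w = 0 := by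
      have := reApply_compress X w
      simp only [ContinuousLinearMap.reApplyInnerSelf_apply, sub_apply,
        inner_sub_left, map_sub] at this ⊢
      linarith
    have h1 := IsPositive.apply_eq_zero h h0
    rw [sub_apply, sub_eq_zero] at h1
    simp only [ContinuousLinearMap.comp_apply, lineProj_self] at h1
    rw [lineProj_apply] at h1
    exact ⟨_, h1⟩
  obtain ⟨c, hc⟩ := (X : H →ₗ[ℂ] H).exists_eq_smul_id_of_forall_notLinearIndependent (by
    intro w hli
    obtain ⟨c, hc⟩ := heig w
    have := LinearIndependent.pair_iff.1 hli c (-1) (by simp [hc])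
    simp at this)
  refine ⟨c, ?_⟩
  ext x
  simpa using LinearMap.congr_fun hc x

/-- For a strictly concave `σ`, equality at `v` in the weighted arithmetic-mean bound forces the
two quadratic forms to agree at `v`. -/
lemma inner_eq_of_mean_eq (hσ : KuboAndo σ) {r : ℝ} (hsc : StrictConc σ r)
    {A B : H →L[ℂ] H} (hA : A.IsPositive) (hB : B.IsPositive) (v : H)
    (h : (1 - r) * A.reApplyInnerSelf v + r * B.reApplyInnerSelf v
      ≤ (σ A B).reApplyInnerSelf v) :
    A.reApplyInnerSelf v = B.reApplyInnerSelf v := by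
  rcases eq_or_ne v 0 with rfl | hv
  · simp [ContinuousLinearMap.reApplyInnerSelf_apply]
  have hn : 0 < ‖v‖ ^ 2 := by positivity
  set α := A.reApplyInnerSelf v / ‖v‖ ^ 2 with hαd
  set β := B.reApplyInnerSelf v / ‖v‖ ^ 2 with hβd
  have hα : 0 ≤ α := div_nonneg (hA.2 v) hn.le
  have hβ : 0 ≤ β := div_nonneg (hB.2 v) hn.le
  have hle := (compress_le hσ hA hB hα hβ v (lineProj_compress hA v)
    (lineProj_compress hB v)).reApply v
  rw [reApply_compress] at hle
  obtain ⟨c, hc⟩ := scalar_of_kuboAndo hσ hα hβ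
  have hpos := hσ.1 _ _ (isPositive_ofReal_smul ContinuousLinearMap.isPositive_one hα)
    (isPositive_ofReal_smul ContinuousLinearMap.isPositive_one hβ)
  have hin := IsPositive.inner_eq hpos v
  set s := (σ ((α : ℂ) • 1) ((β : ℂ) • 1)).reApplyInnerSelf v with hs
  -- The scalar is real, because `c‖v‖²` is a value of a positive form.
  have hcr : c = ((s / ‖v‖ ^ 2 : ℝ) : ℂ) := by
    rw [hc] at hin
    simp only [smul_apply, one_apply_eq_self, inner_smul_right,
      inner_self_eq_norm_sq_to_K] at hin
    have hn' : ((‖v‖ : ℂ)) ^ 2 ≠ 0 := by exact_mod_cast hn.ne'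
    push_cast
    rw [eq_div_iff hn']
    exact hin
  have hαβ : α = β := by
    apply hsc α β hα hβ
    unfold OpLE
    rw [hc, hcr, ← sub_smul, ← Complex.ofReal_sub]
    apply isPositive_ofReal_smul ContinuousLinearMap.isPositive_one
    rw [sub_nonneg, le_div_iff₀ hn]
    have e1 : α * ‖v‖ ^ 2 = A.reApplyInnerSelf v := div_mul_cancel₀ _ hn.ne'
    have e2 : β * ‖v‖ ^ 2 = B.reApplyInnerSelf v := div_mul_cancel₀ _ hn.ne'
    calc ((1 - r) * α + r * β) * ‖v‖ ^ 2
        = (1 - r) * A.reApplyInnerSelf v + r * B.reApplyInnerSelf v := by rw [← e1, ← e2]; ring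
      _ ≤ s := h.trans hle
  exact (div_left_inj' hn.ne').1 hαβ

end

/-! ### The ALM-sequence -/

lemma almSeq_pos {σ₁ σ₂ σ₃ : (H →L[ℂ] H) → (H →L[ℂ] H) → (H →L[ℂ] H)}
    (hKA₁ : KuboAndo σ₁) (hKA₂ : KuboAndo σ₂) (hKA₃ : KuboAndo σ₃) {A B C : H →L[ℂ] H}
    (hA : A.IsPositive) (hB : B.IsPositive) (hC : C.IsPositive) (n : ℕ) :
    (ALMseq σ₁ σ₂ σ₃ A B C n).1.IsPositive ∧ (ALMseq σ₁ σ₂ σ₃ A B C n).2.1.IsPositive ∧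
      (ALMseq σ₁ σ₂ σ₃ A B C n).2.2.IsPositive := by
  induction n with
  | zero => exact ⟨hA, hB, hC⟩
  | succ n ih =>
    obtain ⟨h1, h2, h3⟩ := ih
    exact ⟨hKA₁.1 _ _ h2 h3, hKA₂.1 _ _ h3 h1, hKA₃.1 _ _ h1 h2⟩

/-- A zero first entry would force the other two to vanish, against total mass one. -/
lemma stationary_pos {r₂ r₃ p₁ p₂ p₃ : ℝ}
    (hr₂ : r₂ ∈ Set.Ioo (0:ℝ) 1) (hr₃ : r₃ ∈ Set.Ioo (0:ℝ) 1)
    (hp₂ : 0 ≤ p₂) (hp₃ : 0 ≤ p₃) (hpsum : p₁ + p₂ + p₃ = 1)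
    (hstat₁ : p₁ = r₂ * p₂ + (1 - r₃) * p₃) : 0 < p₁ := by
  obtain ⟨_, _⟩ := hr₂
  obtain ⟨_, _⟩ := hr₃
  rcases hp₂.eq_or_lt with h | h
  · rcases hp₃.eq_or_lt with h' | h'
    · linarith
    · rw [hstat₁, ← h]; nlinarith
  · rw [hstat₁]; nlinarith [mul_pos ‹0 < r₂› h, mul_nonneg (sub_nonneg.2 (le_of_lt ‹r₃ < 1›)) hp₃]

/-- Strict concavity of the ALM mean: with the stationary probability
vector `(p₁,p₂,p₃)` for `(r₁,r₂,r₃)` and `S` the common weak limit of the ALM-sequence from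
`(A,B,C)`, if `⟨Sv,v⟩ = ⟨(p₁A + p₂B + p₃C)v, v⟩` then `⟨Av,v⟩ = ⟨Bv,v⟩ = ⟨Cv,v⟩`. -/
theorem stmt_16
    (σ₁ σ₂ σ₃ : (H →L[ℂ] H) → (H →L[ℂ] H) → (H →L[ℂ] H))
    (hKA₁ : KuboAndo σ₁) (hKA₂ : KuboAndo σ₂) (hKA₃ : KuboAndo σ₃)
    (r₁ r₂ r₃ : ℝ) (hr₁ : r₁ ∈ Set.Ioo (0:ℝ) 1) (hr₂ : r₂ ∈ Set.Ioo (0:ℝ) 1)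
    (hr₃ : r₃ ∈ Set.Ioo (0:ℝ) 1)
    (hdom : ∀ A B : H →L[ℂ] H, A.IsPositive → B.IsPositive →
      OpLE (σ₁ A B) (((1 - r₁ : ℝ) : ℂ) • A + ((r₁ : ℝ) : ℂ) • B) ∧
      OpLE (σ₂ A B) (((1 - r₂ : ℝ) : ℂ) • A + ((r₂ : ℝ) : ℂ) • B) ∧
      OpLE (σ₃ A B) (((1 - r₃ : ℝ) : ℂ) • A + ((r₃ : ℝ) : ℂ) • B))
    (hsc : (StrictConc σ₁ r₁ ∧ StrictConc σ₂ r₂) ∨ (StrictConc σ₂ r₂ ∧ StrictConc σ₃ r₃) ∨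
      (StrictConc σ₁ r₁ ∧ StrictConc σ₃ r₃))
    (p₁ p₂ p₃ : ℝ) (hp₁ : 0 ≤ p₁) (hp₂ : 0 ≤ p₂) (hp₃ : 0 ≤ p₃) (hpsum : p₁ + p₂ + p₃ = 1)
    (hstat₁ : p₁ = r₂ * p₂ + (1 - r₃) * p₃)
    (hstat₂ : p₂ = (1 - r₁) * p₁ + r₃ * p₃)
    (hstat₃ : p₃ = r₁ * p₁ + (1 - r₂) * p₂)
    (A B C S : H →L[ℂ] H) (hA : A.IsPositive) (hB : B.IsPositive) (hC : C.IsPositive)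
    (hS : IsWeakALMLimit σ₁ σ₂ σ₃ A B C S)
    (v : H)
    (heq : S.reApplyInnerSelf v
      = ((p₁ : ℂ) • A + (p₂ : ℂ) • B + (p₃ : ℂ) • C).reApplyInnerSelf v) :
    A.reApplyInnerSelf v = B.reApplyInnerSelf v ∧
    B.reApplyInnerSelf v = C.reApplyInnerSelf v := by
  have hp₁' : 0 < p₁ := stationary_pos hr₂ hr₃ hp₂ hp₃ hpsum hstat₁
  -- The stationarity equations are invariant under cyclic shifts of the indices.
  have hp₂' : 0 < p₂ := stationary_pos (r₂ := r₃) (r₃ := r₁) hr₃ hr₁ hp₃ hp₁ (by linarith)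
    (by linarith)
  have hp₃' : 0 < p₃ := stationary_pos (r₂ := r₁) (r₃ := r₂) hr₁ hr₂ hp₁ hp₂ (by linarith)
    (by linarith)
  have hcom : ∀ A B : H →L[ℂ] H, A.IsPositive → B.IsPositive →
      (σ₁ A B).reApplyInnerSelf v
        ≤ (1 - r₁) * A.reApplyInnerSelf v + r₁ * B.reApplyInnerSelf v ∧
      (σ₂ A B).reApplyInnerSelf v
        ≤ (1 - r₂) * A.reApplyInnerSelf v + r₂ * B.reApplyInnerSelf v ∧
      (σ₃ A B).reApplyInnerSelf v
        ≤ (1 - r₃) * A.reApplyInnerSelf v + r₃ * B.reApplyInnerSelf v := by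
    intro A B hA hB
    obtain ⟨h1, h2, h3⟩ := hdom A B hA hB
    simp only [← reApply_smul, ← reApply_add]
    exact ⟨h1.reApply v, h2.reApply v, h3.reApply v⟩
  -- The `p`-average of the forms along the sequence, which decreases to `⟨Sv,v⟩`.
  let f : ℕ → ℝ := fun n => p₁ * (ALMseq σ₁ σ₂ σ₃ A B C n).1.reApplyInnerSelf v
    + p₂ * (ALMseq σ₁ σ₂ σ₃ A B C n).2.1.reApplyInnerSelf v
    + p₃ * (ALMseq σ₁ σ₂ σ₃ A B C n).2.2.reApplyInnerSelf v
  have hstat : ∀ a b c : ℝ, p₁ * ((1 - r₁) * b + r₁ * c) + p₂ * ((1 - r₂) * c + r₂ * a)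
      + p₃ * ((1 - r₃) * a + r₃ * b) = p₁ * a + p₂ * b + p₃ * c := by
    intro a b c
    linear_combination (-a) * hstat₁ - b * hstat₂ - c * hstat₃
  have hanti : Antitone f := by
    refine antitone_nat_of_succ_le fun n => ?_
    obtain ⟨ha, hb, hc⟩ := almSeq_pos hKA₁ hKA₂ hKA₃ hA hB hC n
    have h1 := (hcom _ _ hb hc).1
    have h2 := (hcom _ _ hc ha).2.1
    have h3 := (hcom _ _ ha hb).2.2
    refine le_of_le_of_eq ?_ (hstat ((ALMseq σ₁ σ₂ σ₃ A B C n).1.reApplyInnerSelf v)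
      ((ALMseq σ₁ σ₂ σ₃ A B C n).2.1.reApplyInnerSelf v)
      ((ALMseq σ₁ σ₂ σ₃ A B C n).2.2.reApplyInnerSelf v))
    exact add_le_add (add_le_add (mul_le_mul_of_nonneg_left h1 hp₁)
      (mul_le_mul_of_nonneg_left h2 hp₂)) (mul_le_mul_of_nonneg_left h3 hp₃)
  have hlim : Tendsto f atTop (𝓝 (S.reApplyInnerSelf v)) := by
    have h := (((hS.1 v).const_mul p₁).add ((hS.2.1 v).const_mul p₂)).add
      ((hS.2.2 v).const_mul p₃)
    rwa [← add_mul, ← add_mul, hpsum, one_mul] at h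
  have h1 : S.reApplyInnerSelf v ≤ f 1 := hanti.le_of_tendsto hlim 1
  have hSv : S.reApplyInnerSelf v = p₁ * A.reApplyInnerSelf v + p₂ * B.reApplyInnerSelf v
      + p₃ * C.reApplyInnerSelf v := by
    simp only [heq, reApply_add, reApply_smul]
  rw [hSv, ← hstat] at h1
  have h1' : f 1 = p₁ * (σ₁ B C).reApplyInnerSelf v + p₂ * (σ₂ C A).reApplyInnerSelf v
      + p₃ * (σ₃ A B).reApplyInnerSelf v := rfl
  rw [h1'] at h1
  have d1 := (hcom _ _ hB hC).1
  have d2 := (hcom _ _ hC hA).2.1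
  have d3 := (hcom _ _ hA hB).2.2
  have m1 := mul_le_mul_of_nonneg_left d1 hp₁
  have m2 := mul_le_mul_of_nonneg_left d2 hp₂
  have m3 := mul_le_mul_of_nonneg_left d3 hp₃
  -- A sum of three bounds that is attained attains each of them, the weights being positive.
  have e1 := le_of_mul_le_mul_left (by linarith) hp₁'
    (b := (1 - r₁) * B.reApplyInnerSelf v + r₁ * C.reApplyInnerSelf v)
    (c := (σ₁ B C).reApplyInnerSelf v)
  have e2 := le_of_mul_le_mul_left (by linarith) hp₂'
    (b := (1 - r₂) * C.reApplyInnerSelf v + r₂ * A.reApplyInnerSelf v)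
    (c := (σ₂ C A).reApplyInnerSelf v)
  have e3 := le_of_mul_le_mul_left (by linarith) hp₃'
    (b := (1 - r₃) * A.reApplyInnerSelf v + r₃ * B.reApplyInnerSelf v)
    (c := (σ₃ A B).reApplyInnerSelf v)
  rcases hsc with ⟨s1, s2⟩ | ⟨s2, s3⟩ | ⟨s1, s3⟩
  · have q1 := inner_eq_of_mean_eq hKA₁ s1 hB hC v e1
    have q2 := inner_eq_of_mean_eq hKA₂ s2 hC hA v e2
    exact ⟨(q1.trans q2).symm, q1⟩
  · have q2 := inner_eq_of_mean_eq hKA₂ s2 hC hA v e2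
    have q3 := inner_eq_of_mean_eq hKA₃ s3 hA hB v e3
    exact ⟨q3, (q2.trans q3).symm⟩
  · exact ⟨inner_eq_of_mean_eq hKA₃ s3 hA hB v e3, inner_eq_of_mean_eq hKA₁ s1 hB hC v e1⟩
end

section
/- Let H be a complex Hilbert space and let A, B, C ∈ B(H)_+ be invertible. Let (A_n, B_n, C_n) be the ALM-sequence from (A,B,C) with (#,#,#) and (A_n′, B_n′, C_n′) the ALM-sequence from (A^{−1}, B^{−1}, C^{−1}) with (#,#,#), where # = #_{1/2} is the (symmetric) operator geometric mean. Then (A_n), (B_n), (C_n) converge weakly to a common invertible positive limit S, (A_n′), (B_n′), (C_n′) converge weakly to a common invertible positive limit T, and T = S^{−1}. -/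
/-!
Both ALM-sequences converge in operator norm, by a contraction argument in the style of
Thompson's part metric. `A # B` is the unique positive solution `G` of the Riccati equation
`G A⁻¹ G = B`; this makes `#` symmetric and gives `(A # B)⁻¹ = A⁻¹ # B⁻¹`
(`geomMean_riccati`, `eq_geomMean_of_riccati`). Operator monotonicity of the square root gives
`B ≤ (1 + r) C → A # B ≤ (1 + r / 2) (A # C)` (`geomMean_le_right`). Hence if the three operators
are pairwise within a factor `1 + r`, then after one step they are within a factor `1 + r / 2`
(`ALMInv.step`), and `B # C` is within a factor `1 + r / 2` of `B = B # B`. Norms stay bounded by the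
arithmetic-geometric mean inequality, so these order estimates become geometrically decaying norm
estimates and the three sequences are Cauchy with the same limit (`exists_limit`).

The ALM-sequence of the inverses is the sequence of inverses, so its limit `T` satisfies
`S T = T S = 1` for the limit `S` of the original sequence; in particular both are invertible.
-/

open Filter Topology ContinuousLinearMap

variable {H : Type*} [NormedAddCommGroup H] [InnerProductSpace ℂ H] [CompleteSpace H]

/-! ### Algebraic properties of the geometric mean -/

lemma opPow_eq_rpow {A : H →L[ℂ] H} (hA : 0 ≤ A) (r : ℝ) : opPow A r = A ^ r :=
  (CFC.rpow_eq_cfc_real hA).symm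

/-- The square root `R = A^{1/2}` and its inverse `Q = A^{-1/2}`, with the algebraic relations
between them that all later computations use. -/
lemma geomMean_aux {A : H →L[ℂ] H} (hA : IsStrictlyPositive A) :
    ∃ R Q : H →L[ℂ] H, (∀ B, geomMean (1/2) A B = R * opPow (Q * B * Q) (1/2) * R) ∧
      0 ≤ R ∧ 0 ≤ Q ∧ R * R = A ∧ R * Q = 1 ∧ Q * R = 1 ∧ Q * Q = Ring.inverse A := by
  refine ⟨A ^ (1/2 : ℝ), A ^ (-(1/2) : ℝ), fun B => ?_, CFC.rpow_nonneg, CFC.rpow_nonneg, ?_,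
    CFC.rpow_mul_rpow_neg _ hA, CFC.rpow_neg_mul_rpow _ hA, ?_⟩
  · rw [geomMean, opPow_eq_rpow hA.nonneg, opPow_eq_rpow hA.nonneg]
  · rw [← CFC.rpow_add hA.isUnit]; norm_num [CFC.rpow_one A hA.nonneg]
  · rw [← CFC.rpow_add hA.isUnit, CFC.inverse_eq_rpow_neg_one hA]; norm_num

lemma opPow_half {A : H →L[ℂ] H} (hA : 0 ≤ A) : opPow A (1/2) = CFC.sqrt A := by
  rw [opPow_eq_rpow hA, CFC.sqrt_eq_rpow]

lemma conj_nonneg' {A R : H →L[ℂ] H} (hA : 0 ≤ A) (hR : 0 ≤ R) : 0 ≤ R * A * R :=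
  conjugate_nonneg_of_nonneg hA hR

lemma geomMean_nonneg {A B : H →L[ℂ] H} (hA : IsStrictlyPositive A) (hB : 0 ≤ B) :
    0 ≤ geomMean (1/2) A B := by
  obtain ⟨R, Q, hG, hR, hQ, -⟩ := geomMean_aux hA
  rw [hG, opPow_half (conj_nonneg' hB hQ)]
  exact conj_nonneg' (CFC.sqrt_nonneg _) hR

/-- `A # B` solves the Riccati equation `G A⁻¹ G = B`. -/
lemma geomMean_riccati {A B : H →L[ℂ] H} (hA : IsStrictlyPositive A) (hB : 0 ≤ B) :
    geomMean (1/2) A B * Ring.inverse A * geomMean (1/2) A B = B := by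
  obtain ⟨R, Q, hG, hR, hQ, hRR, hRQ, hQR, hQQ⟩ := geomMean_aux hA
  have hD := conj_nonneg' hB hQ
  rw [hG, opPow_half hD, ← hQQ]
  have h := CFC.sqrt_mul_sqrt_self _ hD
  set D := CFC.sqrt (Q * B * Q)
  calc R * D * R * (Q * Q) * (R * D * R) = R * D * (R * Q) * (Q * R) * D * R := by
        simp only [mul_assoc]
    _ = R * (D * D) * R := by rw [hRQ, hQR]; simp only [mul_assoc, mul_one]
    _ = (R * Q) * B * (Q * R) := by rw [h]; simp only [mul_assoc]
    _ = B := by rw [hRQ, hQR, one_mul, mul_one]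

/-- `A # B` is the only positive solution of the Riccati equation `G A⁻¹ G = B`. -/
lemma eq_geomMean_of_riccati {A B G : H →L[ℂ] H} (hA : IsStrictlyPositive A) (hB : 0 ≤ B)
    (hG0 : 0 ≤ G) (h : G * Ring.inverse A * G = B) : G = geomMean (1/2) A B := by
  obtain ⟨R, Q, hG, hR, hQ, hRR, hRQ, hQR, hQQ⟩ := geomMean_aux hA
  have hs : CFC.sqrt (Q * B * Q) = Q * G * Q := by
    refine CFC.sqrt_unique ?_ (conj_nonneg' hG0 hQ)
    rw [← h, ← hQQ]
    simp only [mul_assoc]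
  rw [hG, opPow_half (conj_nonneg' hB hQ), hs]
  calc G = (R * Q) * G * (Q * R) := by rw [hRQ, hQR, one_mul, mul_one]
    _ = _ := by simp only [mul_assoc]

lemma geomMean_pos {A B : H →L[ℂ] H} (hA : IsStrictlyPositive A) (hB : IsStrictlyPositive B) :
    IsStrictlyPositive (geomMean (1/2) A B) := by
  refine IsUnit.isStrictlyPositive ?_ (geomMean_nonneg hA hB.nonneg)
  obtain ⟨R, Q, hG, hR, hQ, hRR, hRQ, hQR, hQQ⟩ := geomMean_aux hA
  have uR : IsUnit R := ⟨⟨R, Q, hRQ, hQR⟩, rfl⟩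
  have uQ : IsUnit Q := ⟨⟨Q, R, hQR, hRQ⟩, rfl⟩
  have hD := conj_nonneg' hB.nonneg hQ
  rw [hG, opPow_half hD]
  exact (uR.mul ((CFC.isUnit_sqrt_iff _ hD).2 ((uQ.mul hB.isUnit).mul uQ))).mul uR

lemma geomMean_inverse {A B : H →L[ℂ] H} (hA : IsStrictlyPositive A)
    (hB : IsStrictlyPositive B) :
    geomMean (1/2) (Ring.inverse A) (Ring.inverse B) = Ring.inverse (geomMean (1/2) A B) := by
  have hG := geomMean_pos hA hB
  refine (eq_geomMean_of_riccati hA.ringInverse hB.ringInverse.nonneg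
    hG.ringInverse.nonneg ?_).symm
  have h := geomMean_riccati hA hB.nonneg
  set G := geomMean (1/2) A B
  clear_value G
  obtain ⟨u, rfl⟩ := hA.isUnit
  obtain ⟨v, rfl⟩ := hB.isUnit
  obtain ⟨g, rfl⟩ := hG.isUnit
  simp only [Ring.inverse_unit] at h ⊢
  norm_cast at h ⊢
  rw [← h]
  simp only [mul_inv_rev, inv_inv, mul_assoc]

lemma geomMean_comm {A B : H →L[ℂ] H} (hA : IsStrictlyPositive A)
    (hB : IsStrictlyPositive B) : geomMean (1/2) A B = geomMean (1/2) B A := by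
  have hG := geomMean_pos hA hB
  refine eq_geomMean_of_riccati hB hA.nonneg hG.nonneg ?_
  have h := geomMean_riccati hA hB.nonneg
  set G := geomMean (1/2) A B
  clear_value G
  obtain ⟨u, rfl⟩ := hA.isUnit
  obtain ⟨v, rfl⟩ := hB.isUnit
  obtain ⟨g, rfl⟩ := hG.isUnit
  simp only [Ring.inverse_unit] at h ⊢
  norm_cast at h ⊢
  rw [← h]
  group

lemma geomMean_self {A : H →L[ℂ] H} (hA : IsStrictlyPositive A) : geomMean (1/2) A A = A :=
  (eq_geomMean_of_riccati hA hA.nonneg hA.nonneg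
    (by rw [Ring.mul_inverse_cancel _ hA.isUnit, one_mul])).symm

/-! ### Order estimates -/

/-- Monotonicity in the second argument, in the quantitative form
`B ≤ (1 + r) C → A # B ≤ (1 + r / 2) (A # C)`, which rests on `1 + r ≤ (1 + r / 2) ^ 2`. -/
lemma geomMean_le_right {A B C : H →L[ℂ] H} {r : ℝ} (hr : 0 ≤ r) (hA : IsStrictlyPositive A)
    (hB : 0 ≤ B) (hC : 0 ≤ C) (h : B ≤ (1 + r) • C) :
    geomMean (1/2) A B ≤ (1 + r / 2) • geomMean (1/2) A C := by
  obtain ⟨R, Q, hG, hR, hQ, hRR, hRQ, hQR, hQQ⟩ := geomMean_aux hA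
  have hBD := conj_nonneg' hB hQ
  have hCD := conj_nonneg' hC hQ
  rw [hG, hG, opPow_half hBD, opPow_half hCD]
  have h1 : Q * B * Q ≤ ((1 + r / 2) * (1 + r / 2)) • (Q * C * Q) := by
    calc Q * B * Q ≤ Q * ((1 + r) • C) * Q := conjugate_le_conjugate_of_nonneg h hQ
      _ = (1 + r) • (Q * C * Q) := by simp only [mul_smul_comm, smul_mul_assoc]
      _ ≤ _ := smul_le_smul_of_nonneg_right (by nlinarith [sq_nonneg r]) hCD
  have h2 : CFC.sqrt (((1 + r / 2) * (1 + r / 2)) • (Q * C * Q))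
      = (1 + r / 2) • CFC.sqrt (Q * C * Q) := by
    refine CFC.sqrt_unique ?_ (smul_nonneg (by positivity) (CFC.sqrt_nonneg _))
    rw [smul_mul_smul_comm, CFC.sqrt_mul_sqrt_self _ hCD]
  have h3 := CFC.sqrt_le_sqrt _ _ h1
  rw [h2] at h3
  calc _ ≤ _ := conjugate_le_conjugate_of_nonneg h3 hR
    _ = _ := by simp only [mul_smul_comm, smul_mul_assoc]

/-- The operator arithmetic-geometric mean inequality. -/
lemma geomMean_le_arith {A B : H →L[ℂ] H} (hA : IsStrictlyPositive A) (hB : 0 ≤ B) :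
    geomMean (1/2) A B ≤ (1/2 : ℝ) • (A + B) := by
  obtain ⟨R, Q, hG, hR, hQ, hRR, hRQ, hQR, hQQ⟩ := geomMean_aux hA
  have hBD := conj_nonneg' hB hQ
  rw [hG, opPow_half hBD]
  have h := CFC.sqrt_mul_sqrt_self _ hBD
  have hD0 := CFC.sqrt_nonneg (Q * B * Q)
  set D := CFC.sqrt (Q * B * Q)
  have hB' : R * (D * D) * R = B := by
    rw [h]
    calc R * (Q * B * Q) * R = (R * Q) * B * (Q * R) := by simp only [mul_assoc]
      _ = B := by rw [hRQ, hQR, one_mul, mul_one]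
  have hs : IsSelfAdjoint (1 - D) := (IsSelfAdjoint.one _).sub hD0.isSelfAdjoint
  have hsq : 0 ≤ R * ((1 - D) * (1 - D)) * R := conj_nonneg' hs.mul_self_nonneg hR
  have he : R * ((1 - D) * (1 - D)) * R = A + B - (2 : ℝ) • (R * D * R) := by
    conv_rhs => rw [← hRR, ← hB', two_smul]
    noncomm_ring
  rw [he, sub_nonneg] at hsq
  have := smul_le_smul_of_nonneg_left hsq (by norm_num : (0 : ℝ) ≤ 1/2)
  rwa [smul_smul, show (1/2 * 2 : ℝ) = 1 by norm_num, one_smul] at this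

lemma norm_geomMean_le {A B : H →L[ℂ] H} {m : ℝ} (hA : IsStrictlyPositive A) (hB : 0 ≤ B)
    (hAm : ‖A‖ ≤ m) (hBm : ‖B‖ ≤ m) : ‖geomMean (1/2) A B‖ ≤ m := by
  have h := CStarAlgebra.norm_le_norm_of_nonneg_of_le (geomMean_nonneg hA hB)
    (geomMean_le_arith hA hB)
  rw [norm_smul, Real.norm_of_nonneg (by norm_num)] at h
  linarith [norm_add_le A B]

/-- Any two strictly positive operators are comparable up to a scalar factor. -/
lemma exists_le_smul {A B : H →L[ℂ] H} (hA : 0 ≤ A) (hB : IsStrictlyPositive B) :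
    ∃ r : ℝ, 0 ≤ r ∧ A ≤ r • B := by
  obtain ⟨R, Q, -, hR, hQ, hRR, hRQ, hQR, hQQ⟩ := geomMean_aux hB
  have hD := conj_nonneg' hA hQ
  refine ⟨‖Q * A * Q‖, norm_nonneg _, ?_⟩
  have h := conjugate_le_conjugate_of_nonneg
    (IsSelfAdjoint.le_algebraMap_norm_self hD.isSelfAdjoint) hR
  rw [Algebra.algebraMap_eq_smul_one, mul_smul_comm, smul_mul_assoc, mul_one, hRR] at h
  calc A = (R * Q) * A * (Q * R) := by rw [hRQ, hQR, one_mul, mul_one]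
    _ = R * (Q * A * Q) * R := by simp only [mul_assoc]
    _ ≤ _ := h

lemma norm_sub_le_of_le_smul {X Y : H →L[ℂ] H} {s m : ℝ} (hs : 0 ≤ s)
    (hXm : ‖X‖ ≤ m) (hYm : ‖Y‖ ≤ m) (h1 : X ≤ (1 + s) • Y) (h2 : Y ≤ (1 + s) • X) :
    ‖X - Y‖ ≤ 3 * s * m := by
  -- `W = (1 + s) Y - X` is positive and dominated by `s (X + Y)`, and `X - Y = s Y - W`.
  have hW0 : 0 ≤ (1 + s) • Y - X := sub_nonneg.2 h1
  have hW1 : (1 + s) • Y - X ≤ s • (X + Y) := by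
    rw [← sub_nonneg] at h2 ⊢
    convert! h2 using 1
    module
  have hW := CStarAlgebra.norm_le_norm_of_nonneg_of_le hW0 hW1
  have e : X - Y = s • Y - ((1 + s) • Y - X) := by module
  have t1 := norm_sub_le (s • Y) ((1 + s) • Y - X)
  rw [← e] at t1
  rw [norm_smul, Real.norm_of_nonneg hs] at hW t1
  nlinarith [mul_le_mul_of_nonneg_left (norm_add_le X Y) hs,
    mul_le_mul_of_nonneg_left hXm hs, mul_le_mul_of_nonneg_left hYm hs]

/-- `X` and `Y` are within the factor `1 + r` of each other in the Loewner order. -/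
def Near (r : ℝ) (X Y : H →L[ℂ] H) : Prop := X ≤ (1 + r) • Y ∧ Y ≤ (1 + r) • X

lemma Near.symm {r : ℝ} {X Y : H →L[ℂ] H} (h : Near r X Y) : Near r Y X := ⟨h.2, h.1⟩

lemma Near.mono {r s : ℝ} {X Y : H →L[ℂ] H} (hX : 0 ≤ X) (hY : 0 ≤ Y) (h : Near r X Y)
    (hrs : r ≤ s) : Near s X Y :=
  ⟨h.1.trans (smul_le_smul_of_nonneg_right (by linarith) hY),
    h.2.trans (smul_le_smul_of_nonneg_right (by linarith) hX)⟩

lemma exists_near {X Y : H →L[ℂ] H} (hX : IsStrictlyPositive X) (hY : IsStrictlyPositive Y) :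
    ∃ r : ℝ, 0 ≤ r ∧ Near r X Y := by
  obtain ⟨a, ha, h1⟩ := exists_le_smul hX.nonneg hY
  obtain ⟨b, hb, h2⟩ := exists_le_smul hY.nonneg hX
  exact ⟨a + b, by positivity,
    h1.trans (smul_le_smul_of_nonneg_right (by linarith) hY.nonneg),
    h2.trans (smul_le_smul_of_nonneg_right (by linarith) hX.nonneg)⟩

/-- The mean `A # ·` halves the distance `r` of two operators. -/
lemma Near.geomMean {r : ℝ} {A X Y : H →L[ℂ] H} (hr : 0 ≤ r) (hA : IsStrictlyPositive A)
    (hX : 0 ≤ X) (hY : 0 ≤ Y) (h : Near r X Y) :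
    Near (r / 2) (geomMean (1/2) A X) (geomMean (1/2) A Y) :=
  ⟨geomMean_le_right hr hA hX hY h.1, geomMean_le_right hr hA hY hX h.2⟩

/-! ### Convergence of the ALM-sequence -/

/-- What the ALM-iteration preserves: strict positivity, a common norm bound `m`, and mutual
closeness `Near r` (with `r` halved in each step). -/
def ALMInv (m r : ℝ) (t : (H →L[ℂ] H) × (H →L[ℂ] H) × (H →L[ℂ] H)) : Prop :=
  (IsStrictlyPositive t.1 ∧ IsStrictlyPositive t.2.1 ∧ IsStrictlyPositive t.2.2) ∧
  (‖t.1‖ ≤ m ∧ ‖t.2.1‖ ≤ m ∧ ‖t.2.2‖ ≤ m) ∧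
  Near r t.1 t.2.1 ∧ Near r t.2.1 t.2.2 ∧ Near r t.2.2 t.1

lemma ALMInv.step {m r : ℝ} {X Y Z : H →L[ℂ] H} (hr : 0 ≤ r) (h : ALMInv m r (X, Y, Z)) :
    ALMInv m (r / 2) (geomMean (1/2) Y Z, geomMean (1/2) Z X, geomMean (1/2) X Y) := by
  obtain ⟨⟨hX, hY, hZ⟩, ⟨hXm, hYm, hZm⟩, hXY, hYZ, hZX⟩ := h
  dsimp only at *
  refine ⟨⟨geomMean_pos hY hZ, geomMean_pos hZ hX, geomMean_pos hX hY⟩,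
    ⟨norm_geomMean_le hY hZ.nonneg hYm hZm, norm_geomMean_le hZ hX.nonneg hZm hXm,
      norm_geomMean_le hX hY.nonneg hXm hYm⟩, ?_, ?_, ?_⟩ <;> dsimp only
  · rw [geomMean_comm hY hZ]
    exact hXY.symm.geomMean hr hZ hY.nonneg hX.nonneg
  · rw [geomMean_comm hZ hX]
    exact hYZ.symm.geomMean hr hX hZ.nonneg hY.nonneg
  · rw [geomMean_comm hX hY]
    exact hZX.symm.geomMean hr hY hX.nonneg hZ.nonneg

/-- The ALM-sequence of `(A, B, C)` for the symmetric geometric mean. -/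
noncomputable abbrev almSym (A B C : H →L[ℂ] H) :
    ℕ → (H →L[ℂ] H) × (H →L[ℂ] H) × (H →L[ℂ] H) :=
  ALMseq (geomMean (1/2)) (geomMean (1/2)) (geomMean (1/2)) A B C

lemma exists_inv {A B C : H →L[ℂ] H} (hA : IsStrictlyPositive A) (hB : IsStrictlyPositive B)
    (hC : IsStrictlyPositive C) :
    ∃ m r : ℝ, 0 ≤ r ∧ ∀ n, ALMInv m (r / 2 ^ n) (almSym A B C n) := by
  obtain ⟨a, ha, hAB⟩ := exists_near hA hB
  obtain ⟨b, hb, hBC⟩ := exists_near hB hC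
  obtain ⟨c, hc, hCA⟩ := exists_near hC hA
  refine ⟨‖A‖ + ‖B‖ + ‖C‖, a + b + c, by positivity, fun n => ?_⟩
  have nA := norm_nonneg A
  have nB := norm_nonneg B
  have nC := norm_nonneg C
  induction n with
  | zero =>
    rw [pow_zero, div_one]
    exact ⟨⟨hA, hB, hC⟩, ⟨by change ‖A‖ ≤ _; linarith, by change ‖B‖ ≤ _; linarith,
      by change ‖C‖ ≤ _; linarith⟩,
      hAB.mono hA.nonneg hB.nonneg (by linarith), hBC.mono hB.nonneg hC.nonneg (by linarith),
      hCA.mono hC.nonneg hA.nonneg (by linarith)⟩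
  | succ n ih =>
    rw [pow_succ, ← div_div]
    exact ALMInv.step (by positivity) ih

/-- The ALM-sequence converges in norm. -/
lemma exists_limit {A B C : H →L[ℂ] H} (hA : IsStrictlyPositive A) (hB : IsStrictlyPositive B)
    (hC : IsStrictlyPositive C) :
    ∃ S : H →L[ℂ] H, Tendsto (fun n => (almSym A B C n).1) atTop (𝓝 S) ∧
      Tendsto (fun n => (almSym A B C n).2.1) atTop (𝓝 S) ∧
      Tendsto (fun n => (almSym A B C n).2.2) atTop (𝓝 S) := by
  obtain ⟨m, r, hr, hI⟩ := exists_inv hA hB hC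
  have hrn : ∀ n : ℕ, 0 ≤ r / 2 ^ n := fun n => by positivity
  have h12 : ∀ n, ‖(almSym A B C n).1 - (almSym A B C n).2.1‖ ≤ 3 * (r / 2 ^ n) * m := by
    intro n
    obtain ⟨-, ⟨m1, m2, -⟩, h, -, -⟩ := hI n
    exact norm_sub_le_of_le_smul (hrn n) m1 m2 h.1 h.2
  have h31 : ∀ n, ‖(almSym A B C n).2.2 - (almSym A B C n).1‖ ≤ 3 * (r / 2 ^ n) * m := by
    intro n
    obtain ⟨-, ⟨m1, -, m3⟩, -, -, h⟩ := hI n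
    exact norm_sub_le_of_le_smul (hrn n) m3 m1 h.1 h.2
  have hstep : ∀ n, ‖(almSym A B C (n + 1)).1 - (almSym A B C n).2.1‖
      ≤ 3 * (r / 2 ^ n / 2) * m := by
    intro n
    obtain ⟨⟨-, hY, hZ⟩, ⟨-, m2, -⟩, -, h, -⟩ := hI n
    obtain ⟨-, ⟨m1, -⟩, -⟩ := hI (n + 1)
    have h' := h.symm.geomMean (hrn n) hY hZ.nonneg hY.nonneg
    rw [geomMean_self hY] at h'
    exact norm_sub_le_of_le_smul (by linarith [hrn n]) m1 m2 h'.1 h'.2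
  have hdist : ∀ n, dist (almSym A B C n).1 (almSym A B C (n + 1)).1
      ≤ 9 * r * m / 2 / 2 ^ n := by
    intro n
    calc dist (almSym A B C n).1 (almSym A B C (n + 1)).1
        ≤ dist (almSym A B C n).1 (almSym A B C n).2.1 +
          dist (almSym A B C (n + 1)).1 (almSym A B C n).2.1 := dist_triangle_right _ _ _
      _ ≤ 3 * (r / 2 ^ n) * m + 3 * (r / 2 ^ n / 2) * m := by
        rw [dist_eq_norm, dist_eq_norm]; exact add_le_add (h12 n) (hstep n)
      _ = _ := by ring
  obtain ⟨S, hS⟩ := cauchySeq_tendsto_of_complete (cauchySeq_of_le_geometric_two hdist)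
  have h0 : Tendsto (fun n : ℕ => 3 * (r / 2 ^ n) * m) atTop (𝓝 0) := by
    have := (tendsto_pow_atTop_nhds_zero_of_lt_one (r := (1/2 : ℝ)) (by norm_num)
      (by norm_num)).const_mul (3 * r * m)
    rw [mul_zero] at this
    refine this.congr fun n => ?_
    rw [one_div, inv_pow]
    ring
  refine ⟨S, hS, ?_, ?_⟩
  · simpa using hS.sub (squeeze_zero_norm h12 h0)
  · simpa using (squeeze_zero_norm h31 h0).add hS

/-- Inversion intertwines the ALM-sequences of `(A, B, C)` and `(A⁻¹, B⁻¹, C⁻¹)`. -/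
lemma almSym_inverse {A B C : H →L[ℂ] H} (hA : IsStrictlyPositive A)
    (hB : IsStrictlyPositive B) (hC : IsStrictlyPositive C) (n : ℕ) :
    almSym (Ring.inverse A) (Ring.inverse B) (Ring.inverse C) n =
      (Ring.inverse (almSym A B C n).1, Ring.inverse (almSym A B C n).2.1,
        Ring.inverse (almSym A B C n).2.2) := by
  obtain ⟨m, r, hr, hI⟩ := exists_inv hA hB hC
  induction n with
  | zero => rfl
  | succ n ih =>
    obtain ⟨⟨hX, hY, hZ⟩, -⟩ := hI n
    simp only [almSym, ALMseq] at ih hX hY hZ ⊢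
    rw [ih]
    dsimp only
    rw [geomMean_inverse hY hZ, geomMean_inverse hZ hX, geomMean_inverse hX hY]

lemma tendsto_reApplyInnerSelf {X : ℕ → H →L[ℂ] H} {S : H →L[ℂ] H}
    (h : Tendsto X atTop (𝓝 S)) (x : H) :
    Tendsto (fun n => (X n).reApplyInnerSelf x) atTop (𝓝 (S.reApplyInnerSelf x)) := by
  have hc : Continuous fun T : H →L[ℂ] H => T.reApplyInnerSelf x := by
    simp only [ContinuousLinearMap.reApplyInnerSelf_apply]
    fun_prop
  exact (hc.tendsto S).comp h

/-- Self-adjointness of the ALM geometric mean: for invertible positive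
`A, B, C`, the ALM-sequence from `(A,B,C)` with `(#,#,#)` (with `# = #_{1/2}`) converges weakly
to a common invertible positive limit `S`, the ALM-sequence from `(A⁻¹,B⁻¹,C⁻¹)` converges
weakly to a common invertible positive limit `T`, and `T = S⁻¹`. -/
theorem stmt_19
    (A B C : H →L[ℂ] H) (hA : A.IsPositive) (hB : B.IsPositive) (hC : C.IsPositive)
    (hAu : IsUnit A) (hBu : IsUnit B) (hCu : IsUnit C) :
    ∃ S T : H →L[ℂ] H,
      S.IsPositive ∧ T.IsPositive ∧ IsUnit S ∧ IsUnit T ∧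
      IsWeakALMLimit (geomMean (1/2)) (geomMean (1/2)) (geomMean (1/2)) A B C S ∧
      IsWeakALMLimit (geomMean (1/2)) (geomMean (1/2)) (geomMean (1/2))
        (Ring.inverse A) (Ring.inverse B) (Ring.inverse C) T ∧
      T = Ring.inverse S := by
  have pA := hAu.isStrictlyPositive ((nonneg_iff_isPositive A).2 hA)
  have pB := hBu.isStrictlyPositive ((nonneg_iff_isPositive B).2 hB)
  have pC := hCu.isStrictlyPositive ((nonneg_iff_isPositive C).2 hC)
  obtain ⟨S, hS1, hS2, hS3⟩ := exists_limit pA pB pC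
  obtain ⟨T, hT1, hT2, hT3⟩ := exists_limit pA.ringInverse pB.ringInverse pC.ringInverse
  obtain ⟨m, r, -, hI⟩ := exists_inv pA pB pC
  obtain ⟨m', r', -, hI'⟩ := exists_inv pA.ringInverse pB.ringInverse pC.ringInverse
  have hinv : ∀ n, (almSym (Ring.inverse A) (Ring.inverse B) (Ring.inverse C) n).1
      = Ring.inverse (almSym A B C n).1 := fun n => by rw [almSym_inverse pA pB pC n]
  have hST : S * T = 1 := by
    refine tendsto_nhds_unique (hS1.mul hT1) (tendsto_const_nhds.congr fun n => ?_)
    rw [hinv, Ring.mul_inverse_cancel _ (hI n).1.1.isUnit]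
  have hTS : T * S = 1 := by
    refine tendsto_nhds_unique (hT1.mul hS1) (tendsto_const_nhds.congr fun n => ?_)
    rw [hinv, Ring.inverse_mul_cancel _ (hI n).1.1.isUnit]
  have hS0 : 0 ≤ S := ge_of_tendsto' hS1 fun n => (hI n).1.1.nonneg
  have hT0 : 0 ≤ T := ge_of_tendsto' hT1 fun n => (hI' n).1.1.nonneg
  refine ⟨S, T, (nonneg_iff_isPositive S).1 hS0, (nonneg_iff_isPositive T).1 hT0,
    ⟨⟨S, T, hST, hTS⟩, rfl⟩, ⟨⟨T, S, hTS, hST⟩, rfl⟩,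
    ⟨tendsto_reApplyInnerSelf hS1, tendsto_reApplyInnerSelf hS2, tendsto_reApplyInnerSelf hS3⟩,
    ⟨tendsto_reApplyInnerSelf hT1, tendsto_reApplyInnerSelf hT2, tendsto_reApplyInnerSelf hT3⟩,
    (Ring.inverse_unit (⟨S, T, hST, hTS⟩ : (H →L[ℂ] H)ˣ)).symm⟩
end
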